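/- arXiv:1206.1100 — 2 statements merged into one kernel-verified Lean document; each statement's English description precedes it below -/
import Mathlib

section
/- For every τ ∈ ℍ∖E_D one has ξ_{2−2k}(F_{1−k,D})(τ) = D^{1/2−k} · f_{k,D}(τ) and 𝒟^{2k−1}(F_{1−k,D})(τ) = −((2k−2)!/(4π)^{2k−1}) · D^{1/2−k} · f_{k,D}(τ). -/
noncomputable section

open MeasureTheory

/-- The set of integral binary quadratic forms `[a,b,c]` of discriminant `D`. -/
def QD (D : ℤ) : Set (ℤ × ℤ × ℤ) := {q | q.2.1 ^ 2 - 4 * q.1 * q.2.2 = D}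

/-- `Q(τ,1) = a τ² + b τ + c`. -/
def Qval (q : ℤ × ℤ × ℤ) (τ : ℂ) : ℂ :=
  (q.1 : ℂ) * τ ^ 2 + (q.2.1 : ℂ) * τ + (q.2.2 : ℂ)

/-- `a|τ|² + b x + c` where `τ = x + iy`. -/
def Qell (q : ℤ × ℤ × ℤ) (τ : ℂ) : ℝ :=
  (q.1 : ℝ) * Complex.normSq τ + (q.2.1 : ℝ) * τ.re + (q.2.2 : ℝ)

/-- `ψ(v) = (1/2) ∫₀ᵛ u^(k-3/2) (1-u)^(-1/2) du`. -/
def psi (k : ℕ) (v : ℝ) : ℝ :=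
  (1 / 2) * ∫ u in (0:ℝ)..v, u ^ ((k : ℝ) - 3 / 2) * (1 - u) ^ (-(1:ℝ) / 2)

/-- real power of the integer `D`, as a complex number. -/
def Dpow (D : ℤ) (e : ℝ) : ℂ := (((D : ℝ) ^ e : ℝ) : ℂ)

/-- The summand of the series defining `F_{1-k,D}`. -/
def Fsummand (k : ℕ) (D : ℤ) (τ : ℂ) (q : ℤ × ℤ × ℤ) : ℂ :=
  ((Real.sign (Qell q τ) : ℝ) : ℂ) * Qval q τ ^ (k - 1) *
    ((psi k ((D : ℝ) * τ.im ^ 2 / Complex.normSq (Qval q τ)) : ℝ) : ℂ)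

/-- `F_{1-k,D}`. -/
def F (k : ℕ) (D : ℤ) (τ : ℂ) : ℂ :=
  (Dpow D (1 / 2 - (k : ℝ)) / (((Nat.choose (2 * k - 2) (k - 1) : ℝ) * Real.pi : ℝ) : ℂ)) *
    ∑' q : QD D, Fsummand k D τ (q : ℤ × ℤ × ℤ)

/-- `f_{k,D}`. -/
def fkD (k : ℕ) (D : ℤ) (τ : ℂ) : ℂ :=
  (Dpow D ((k : ℝ) - 1 / 2) / (((Nat.choose (2 * k - 2) (k - 1) : ℝ) * Real.pi : ℝ) : ℂ)) *
    ∑' q : QD D, Qval (q : ℤ × ℤ × ℤ) τ ^ (-(k : ℤ))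

/-- Action of `SL₂(ℤ)` on binary quadratic forms: `(Q ∘ γ)(X,Y) = Q(pX+qY, rX+sY)`. -/
def QAct (q : ℤ × ℤ × ℤ) (γ : Matrix.SpecialLinearGroup (Fin 2) ℤ) : ℤ × ℤ × ℤ :=
  (q.1 * (γ.1 0 0) ^ 2 + q.2.1 * (γ.1 0 0) * (γ.1 1 0) + q.2.2 * (γ.1 1 0) ^ 2,
   2 * q.1 * (γ.1 0 0) * (γ.1 0 1) + q.2.1 * ((γ.1 0 0) * (γ.1 1 1) + (γ.1 0 1) * (γ.1 1 0))
     + 2 * q.2.2 * (γ.1 1 0) * (γ.1 1 1),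
   q.1 * (γ.1 0 1) ^ 2 + q.2.1 * (γ.1 0 1) * (γ.1 1 1) + q.2.2 * (γ.1 1 1) ^ 2)

/-- A narrow class: an orbit of the `SL₂(ℤ)`-action on `QD D`. -/
def IsNarrowClass (D : ℤ) (𝒜 : Set (ℤ × ℤ × ℤ)) : Prop :=
  ∃ q₀ ∈ QD D, 𝒜 = {q | ∃ γ : Matrix.SpecialLinearGroup (Fin 2) ℤ, QAct q₀ γ = q}

/-- `F_{1-k,D,𝒜}`. -/
def FA (k : ℕ) (D : ℤ) (𝒜 : Set (ℤ × ℤ × ℤ)) (τ : ℂ) : ℂ :=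
  ((-1 : ℂ) ^ k * Dpow D (1 / 2 - (k : ℝ)) /
      (((Nat.choose (2 * k - 2) (k - 1) : ℝ) * Real.pi : ℝ) : ℂ)) *
    ∑' q : 𝒜, Fsummand k D τ (q : ℤ × ℤ × ℤ)

/-- `f_{k,D,𝒜}`. -/
def fA (k : ℕ) (D : ℤ) (𝒜 : Set (ℤ × ℤ × ℤ)) (τ : ℂ) : ℂ :=
  ((-1 : ℂ) ^ k * Dpow D ((k : ℝ) - 1 / 2) /
      (((Nat.choose (2 * k - 2) (k - 1) : ℝ) * Real.pi : ℝ) : ℂ)) *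
    ∑' q : 𝒜, Qval (q : ℤ × ℤ × ℤ) τ ^ (-(k : ℤ))

/-- Partial derivative in the real direction `x`. -/
def dxx (G : ℂ → ℂ) (τ : ℂ) : ℂ :=
  deriv (fun x : ℝ => G ((x : ℂ) + (τ.im : ℂ) * Complex.I)) τ.re

/-- Partial derivative in the imaginary direction `y`. -/
def dyy (G : ℂ → ℂ) (τ : ℂ) : ℂ :=
  deriv (fun y : ℝ => G ((τ.re : ℂ) + (y : ℂ) * Complex.I)) τ.im

/-- Wirtinger derivative `∂/∂τ̄ = (1/2)(∂/∂x + i ∂/∂y)`. -/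
def wirDbar (G : ℂ → ℂ) (τ : ℂ) : ℂ := (dxx G τ + Complex.I * dyy G τ) / 2

/-- Wirtinger derivative `∂/∂τ = (1/2)(∂/∂x - i ∂/∂y)`. -/
def wirD (G : ℂ → ℂ) (τ : ℂ) : ℂ := (dxx G τ - Complex.I * dyy G τ) / 2

/-- The operator `ξ_{2-2k}(G)(τ) = 2 i y^{2-2k} conj(∂G/∂τ̄)`. -/
def xiOp (k : ℕ) (G : ℂ → ℂ) (τ : ℂ) : ℂ :=
  2 * Complex.I * (τ.im : ℂ) ^ ((2 : ℤ) - 2 * (k : ℤ)) * (starRingEnd ℂ) (wirDbar G τ)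

/-- The operator `𝒟 = (1/(2πi)) ∂/∂τ`. -/
def Dop (G : ℂ → ℂ) : ℂ → ℂ := fun τ => (1 / (2 * (Real.pi : ℂ) * Complex.I)) * wirD G τ

/-- The weight `2-2k` hyperbolic Laplacian. -/
def DeltaOp (k : ℕ) (G : ℂ → ℂ) (τ : ℂ) : ℂ :=
  -(τ.im : ℂ) ^ 2 * (dxx (fun z => dxx G z) τ + dyy (fun z => dyy G z) τ)
    + Complex.I * ((2 : ℂ) - 2 * (k : ℂ)) * (τ.im : ℂ) * (dxx G τ + Complex.I * dyy G τ)

/-- `φ(v) = ∫₀ᵛ sin(u)^{2k-2} du`. -/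
def phi (k : ℕ) (v : ℝ) : ℝ := ∫ u in (0:ℝ)..v, Real.sin u ^ (2 * k - 2)

/-- `φ̂(τ) = τ^{k-1} sgn(x) φ(arctan|y/x|)`, with value `0` when `x = 0`. -/
def phiHat (k : ℕ) (τ : ℂ) : ℂ :=
  τ ^ (k - 1) * ((Real.sign τ.re : ℝ) : ℂ) *
    ((phi k (Real.arctan |τ.im / τ.re|) : ℝ) : ℂ)

/-- The non-holomorphic Eichler integral
`f^*(τ) = (2i)^{1-2k} ∫_{-τ̄}^{i∞} conj(f(-z̄)) (z+τ)^{2k-2} dz`,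
parametrized along the vertical path `z = -τ̄ + it`, `t ∈ (0,∞)`. -/
def fstar (k : ℕ) (f : ℂ → ℂ) (τ : ℂ) : ℂ :=
  (2 * Complex.I) ^ ((1 : ℤ) - 2 * (k : ℤ)) * Complex.I *
    ∫ t in Set.Ioi (0 : ℝ), (starRingEnd ℂ) (f (τ + (t : ℂ) * Complex.I)) *
      (((2 * τ.im + t : ℝ) : ℂ) * Complex.I) ^ (2 * k - 2)

/-- `a : ℕ → ℂ` is the sequence of Fourier coefficients of `f` (with `a n` the
coefficient of `e^{2πi(n+1)τ}`). -/
def HasFourier (a : ℕ → ℂ) (f : ℂ → ℂ) : Prop :=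
  ∀ τ : ℂ, 0 < τ.im →
    f τ = ∑' n : ℕ, a n * Complex.exp (2 * (Real.pi : ℂ) * Complex.I * ((n : ℂ) + 1) * τ)

/-- The holomorphic Eichler integral `ℰ_f(τ) = ∑_{n≥1} (a_n/n^{2k-1}) e^{2πinτ}`. -/
def EichlerE (k : ℕ) (a : ℕ → ℂ) (τ : ℂ) : ℂ :=
  ∑' n : ℕ, a n / ((n : ℂ) + 1) ^ (2 * k - 1) *
    Complex.exp (2 * (Real.pi : ℂ) * Complex.I * ((n : ℂ) + 1) * τ)

/-- `r_{a,b}(𝒜) = 1_{[Q_{a,b} ∈ 𝒜]} + (-1)^k 1_{[-Q_{a,b} ∈ 𝒜]}`. -/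
def rab (k : ℕ) (D : ℤ) (𝒜 : Set (ℤ × ℤ × ℤ)) (a b : ℤ) : ℝ :=
  Set.indicator 𝒜 1 (a, b, (b ^ 2 - D) / (4 * a)) +
    (-1 : ℝ) ^ k * Set.indicator 𝒜 1 (-a, -b, -((b ^ 2 - D) / (4 * a)))

/-- The constant `c_∞(𝒜)`. -/
def cInftyA (k : ℕ) (D : ℤ) (𝒜 : Set (ℤ × ℤ × ℤ)) : ℝ :=
  -(1 / (2 ^ (2 * k - 2) * (2 * (k : ℝ) - 1) * (Nat.choose (2 * k - 2) (k - 1) : ℝ))) *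
    ∑' n : ℕ, (1 / ((n : ℝ) + 1) ^ k) *
      ∑ b ∈ Finset.range (2 * (n + 1)),
        if (4 * ((n : ℤ) + 1)) ∣ ((b : ℤ) ^ 2 - D) then rab k D 𝒜 ((n : ℤ) + 1) (b : ℤ) else 0

/-- The constant `c_∞`. -/
def cInfty (k : ℕ) (D : ℤ) : ℝ :=
  -(1 / (2 ^ (2 * k - 3) * (2 * (k : ℝ) - 1) * (Nat.choose (2 * k - 2) (k - 1) : ℝ))) *
    ∑' n : ℕ, (1 / ((n : ℝ) + 1) ^ k) *
      (((Finset.range (2 * (n + 1))).filter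
        (fun b : ℕ => (4 * ((n : ℤ) + 1)) ∣ ((b : ℤ) ^ 2 - D))).card : ℝ)

/-- The weight `2-2k` Hecke operator `T_p`. -/
def heckeT (k : ℕ) (p : ℕ) (g : ℂ → ℂ) (τ : ℂ) : ℂ :=
  (p : ℂ) ^ ((1 : ℤ) - 2 * (k : ℤ)) * g ((p : ℂ) * τ) +
    (p : ℂ)⁻¹ * ∑ r ∈ Finset.range p, g ((τ + (r : ℂ)) / (p : ℂ))

open scoped Classical in
/-- The symbol `(D|p)`. -/
def legSym (D : ℤ) (p : ℕ) : ℤ :=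
  if (p : ℤ) ∣ D then 0
  else if p = 2 then (if D % 8 = 1 ∨ D % 8 = 7 then 1 else -1)
  else if ∃ m : ℤ, (p : ℤ) ∣ (m ^ 2 - D) then 1 else -1

/-- Primitive forms of discriminant `D`. -/
def QDprim (D : ℤ) : Set (ℤ × ℤ × ℤ) :=
  {q | q.2.1 ^ 2 - 4 * q.1 * q.2.2 = D ∧ Int.gcd q.1 (Int.gcd q.2.1 q.2.2) = 1}

/-- `F'_{1-k,D}`: the sum over primitive forms, with normalization `D^{(1-k)/2}`. -/
def Fprim (k : ℕ) (D : ℤ) (τ : ℂ) : ℂ :=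
  (Dpow D ((1 - (k : ℝ)) / 2) / (((Nat.choose (2 * k - 2) (k - 1) : ℝ) * Real.pi : ℝ) : ℂ)) *
    ∑' q : QDprim D, Fsummand k D τ (q : ℤ × ℤ × ℤ)

/-- The root `η_Q = (-b+√D)/(2a)`. -/
def etaQ (D : ℤ) (q : ℤ × ℤ × ℤ) : ℝ := (-(q.2.1 : ℝ) + Real.sqrt (D : ℝ)) / (2 * (q.1 : ℝ))

/-- The root `η'_Q = (-b-√D)/(2a)`. -/
def etaQ' (D : ℤ) (q : ℤ × ℤ × ℤ) : ℝ := (-(q.2.1 : ℝ) - Real.sqrt (D : ℝ)) / (2 * (q.1 : ℝ))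

/-- The scaling matrix `A_Q`. -/
def AQ (D : ℤ) (q : ℤ × ℤ × ℤ) : Matrix (Fin 2) (Fin 2) ℝ :=
  (1 / Real.sqrt |etaQ D q - etaQ' D q|) •
    !![1, -(etaQ' D q);
       -(Real.sign (etaQ D q - etaQ' D q)), Real.sign (etaQ D q - etaQ' D q) * etaQ D q]

/-- Real matrix associated to an element of `SL₂(ℤ)`. -/
def toR (γ : Matrix.SpecialLinearGroup (Fin 2) ℤ) : Matrix (Fin 2) (Fin 2) ℝ :=
  γ.1.map (fun n => (n : ℝ))

/-- Möbius action of a real `2×2` matrix on `ℂ`. -/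
def moeb (g : Matrix (Fin 2) (Fin 2) ℝ) (τ : ℂ) : ℂ :=
  ((g 0 0 : ℝ) * τ + (g 0 1 : ℝ)) / ((g 1 0 : ℝ) * τ + (g 1 1 : ℝ))

/-- Automorphy factor `j(g,τ) = cτ + d`. -/
def jfac (g : Matrix (Fin 2) (Fin 2) ℝ) (τ : ℂ) : ℂ :=
  ((g 1 0 : ℝ) : ℂ) * τ + ((g 1 1 : ℝ) : ℂ)

/-- `n`-th period `r_n(f) = ∫₀^∞ f(it) tⁿ dt`. -/
def periodR (f : ℂ → ℂ) (n : ℕ) : ℂ :=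
  ∫ t in Set.Ioi (0 : ℝ), f ((t : ℂ) * Complex.I) * (t : ℂ) ^ n

/-- The even period polynomial `r⁺(f;X)`. -/
def rPlus (k : ℕ) (f : ℂ → ℂ) : Polynomial ℂ :=
  ∑ m ∈ Finset.range k,
    Polynomial.C ((-1 : ℂ) ^ m * (Nat.choose (2 * k - 2) (2 * m) : ℂ) * periodR f (2 * m)) *
      Polynomial.X ^ (2 * k - 2 - 2 * m)

end


open Finset in
lemma aux_cube (e : ℕ) : (e+1)^3 ≤ 8 * 2^e := by
  rcases lt_or_ge e 3 with h | h
  · interval_cases e <;> norm_num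
  · induction e, h using Nat.le_induction with
    | base => norm_num
    | succ n hn ih =>
      have : (n+1+1)^3 ≤ 2 * (n+1)^3 := by nlinarith [mul_le_mul hn hn (by norm_num) (by omega), Nat.mul_le_mul (Nat.mul_le_mul hn hn) hn]
      rw [pow_succ 2]; omega

lemma aux_cube' (e : ℕ) : (e+1)^3 ≤ 8^e := by
  induction e with
  | zero => norm_num
  | succ n ih =>
    have : (n+1+1)^3 ≤ 8 * (n+1)^3 := by nlinarith [sq_nonneg (n:ℤ), Nat.zero_le (n^3), Nat.zero_le (n^2)]
    rw [pow_succ 8]; omega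

lemma div_bound (n : ℕ) (hn : n ≠ 0) : (n.divisors.card)^3 ≤ 8^8 * n := by
  rw [Nat.card_divisors hn, ← Finset.prod_pow]
  have h1 : ∏ p ∈ n.primeFactors, (n.factorization p + 1)^3 ≤
      ∏ p ∈ n.primeFactors, ((if p < 8 then 8 else 1) * p ^ (n.factorization p)) := by
    apply Finset.prod_le_prod' 
    intro p hp
    have hp2 := (Nat.prime_of_mem_primeFactors hp).two_le
    split_ifs with h
    · exact (aux_cube _).trans (Nat.mul_le_mul_left _ (Nat.pow_le_pow_left hp2 _))
    · rw [one_mul]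
      exact (aux_cube' _).trans (Nat.pow_le_pow_left (by omega) _)
  refine h1.trans ?_
  rw [Finset.prod_mul_distrib]
  have h2 : ∏ p ∈ n.primeFactors, p ^ (n.factorization p) = n := by
    exact Nat.prod_factorization_pow_eq_self hn
  rw [h2]
  apply Nat.mul_le_mul_right
  rw [Finset.prod_ite]
  simp only [Finset.prod_const, one_pow, mul_one]
  apply Nat.pow_le_pow_right (by norm_num)
  calc _ ≤ (Finset.range 8).card := Finset.card_le_card (by intro p; simp)
    _ = 8 := by simp

lemma summable_b (D : ℤ) (hD : 0 < D) (hDsq : ¬∃ m : ℤ, m ^ 2 = D) :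
    Summable (fun q : QD D => (1 + |((q : ℤ × ℤ × ℤ).2.1 : ℝ)|)^(-(2:ℝ))) := by
  classical
  let g : ℤ × ℤ → ℝ := fun p => if p.2 ∣ p.1^2 - D then (1 + |(p.1 : ℝ)|)^(-(2:ℝ)) else 0
  have hne : ∀ b : ℤ, b^2 - D ≠ 0 := fun b h => hDsq ⟨b, by linarith⟩
  have hpos : ∀ b : ℤ, (0:ℝ) < 1 + |(b : ℝ)| := fun b => by positivity
  have hg0 : ∀ p, 0 ≤ g p := by
    intro p; simp only [g]; split_ifs <;> positivity
  let S : ℤ → Finset ℤ := fun b => ((b^2-D).natAbs.divisors.image (fun n : ℕ => (n:ℤ))) ∪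
      ((b^2-D).natAbs.divisors.image (fun n : ℕ => -(n:ℤ)))
  have hS : ∀ b a : ℤ, a ∉ S b → g (b,a) = 0 := by
    intro b a ha
    simp only [g]
    rw [if_neg]
    intro hdvd
    apply ha
    simp only [S, Finset.mem_union, Finset.mem_image, Nat.mem_divisors]
    have h3 : a.natAbs ∣ (b^2-D).natAbs := Int.natAbs_dvd_natAbs.mpr hdvd
    have h4 : (b^2-D).natAbs ≠ 0 := Int.natAbs_ne_zero.mpr (hne b)
    rcases Int.natAbs_eq a with h | h
    · left; exact ⟨_, ⟨h3, h4⟩, h.symm⟩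
    · right; exact ⟨_, ⟨h3, h4⟩, h.symm⟩
  have hcard : ∀ b : ℤ, ((S b).card : ℝ) ≤ (2 * (8^8 * ((D:ℝ)+1)) ^ ((1:ℝ)/3)) * (1 + |(b : ℝ)|)^((2:ℝ)/3) := by
    intro b
    obtain ⟨n, hn⟩ : ∃ n, n = (b^2-D).natAbs := ⟨_, rfl⟩
    have h5 : (S b).card ≤ 2 * n.divisors.card := by
      refine (Finset.card_union_le _ _).trans ?_
      rw [← hn]
      have := Finset.card_image_le (s := n.divisors) (f := fun n : ℕ => (n:ℤ))
      have := Finset.card_image_le (s := n.divisors) (f := fun n : ℕ => -(n:ℤ))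
      omega
    have h6 := div_bound n (hn ▸ Int.natAbs_ne_zero.mpr (hne b))
    have h7 : (n:ℝ) ≤ ((D:ℝ)+1) * (1 + |(b : ℝ)|)^2 := by
      have : (n:ℝ) = |(b:ℝ)^2 - D| := by
        rw [hn]; push_cast [Nat.cast_natAbs]; rfl
      rw [this]
      have hD' : (0:ℝ) < D := by exact_mod_cast hD
      have : |(b:ℝ)|^2 = (b:ℝ)^2 := sq_abs _
      rw [abs_le]
      constructor <;> nlinarith [abs_nonneg (b:ℝ), mul_nonneg hD'.le (abs_nonneg (b:ℝ)), mul_nonneg hD'.le (sq_nonneg (b:ℝ))]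
    have h8 : ((n.divisors.card : ℝ))^(3:ℕ) ≤ (8^8 * ((D:ℝ)+1)) * (1 + |(b : ℝ)|)^2 := by
      have : ((n.divisors.card : ℝ))^(3:ℕ) ≤ 8^8 * n := by exact_mod_cast h6
      nlinarith
    have hD' : (0:ℝ) < D := by exact_mod_cast hD
    have h9 : (n.divisors.card : ℝ) ≤ (8^8 * ((D:ℝ)+1)) ^ ((1:ℝ)/3) * (1 + |(b : ℝ)|)^((2:ℝ)/3) := by
      have : (n.divisors.card : ℝ) = (((n.divisors.card : ℝ))^(3:ℕ)) ^ ((1:ℝ)/3) := by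
        rw [← Real.rpow_natCast, ← Real.rpow_mul (by positivity)]; norm_num
      rw [this]
      have e2 : (1 + |(b : ℝ)|)^((2:ℝ)/3) = ((1 + |(b : ℝ)|)^2)^((1:ℝ)/3) := by
        rw [← Real.rpow_natCast, ← Real.rpow_mul (hpos b).le]; norm_num
      rw [e2, ← Real.mul_rpow (by positivity) (by positivity)]
      exact Real.rpow_le_rpow (pow_nonneg (Nat.cast_nonneg _) _) h8 (by norm_num)
    have : ((S b).card : ℝ) ≤ 2 * n.divisors.card := by exact_mod_cast h5
    nlinarith
  have hsum : Summable g := by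
    rw [summable_prod_of_nonneg hg0]
    constructor
    · intro b
      exact summable_of_ne_finset_zero (s := S b) (fun a ha => hS b a ha)
    · have hb : ∀ b, ∑' a, g (b,a) ≤ (2 * (8^8 * ((D:ℝ)+1)) ^ ((1:ℝ)/3)) * (1 + |(b : ℝ)|)^(-((4:ℝ)/3)) := by
        intro b
        rw [tsum_eq_sum (s := S b) (fun a ha => hS b a ha)]
        calc ∑ a ∈ S b, g (b,a) ≤ ∑ a ∈ S b, (1 + |(b : ℝ)|)^(-(2:ℝ)) := by
              apply Finset.sum_le_sum; intro a _
              simp only [g]; split_ifs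
              · exact le_rfl
              · positivity
          _ = (S b).card * (1 + |(b : ℝ)|)^(-(2:ℝ)) := by simp
          _ ≤ ((2 * (8^8 * ((D:ℝ)+1)) ^ ((1:ℝ)/3)) * (1 + |(b : ℝ)|)^((2:ℝ)/3)) * (1 + |(b : ℝ)|)^(-(2:ℝ)) :=
              mul_le_mul_of_nonneg_right (hcard b) (by positivity)
          _ = _ := by
              rw [mul_assoc, ← Real.rpow_add (hpos b)]; norm_num
      refine Summable.of_nonneg_of_le (fun b => tsum_nonneg (fun a => hg0 _)) hb ?_
      apply Summable.mul_left
      have h1 : Summable (fun n : ℕ => (1 + |((n:ℕ) : ℝ)|)^(-((4:ℝ)/3))) := by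
        have := (summable_nat_add_iff 1).mpr (Real.summable_nat_rpow.mpr (show -((4:ℝ)/3) < -1 by norm_num))
        refine this.congr (fun n => ?_)
        rw [Nat.abs_cast]; push_cast; ring_nf
      apply Summable.of_nat_of_neg
      · simpa using h1
      · simpa using h1
  have hinj : Function.Injective (fun q : QD D => (((q : ℤ × ℤ × ℤ).2.1, (q : ℤ × ℤ × ℤ).1) : ℤ × ℤ)) := by
    rintro ⟨⟨a,b,c⟩,h⟩ ⟨⟨a',b',c'⟩,h'⟩ he
    simp only [Prod.mk.injEq] at he
    obtain ⟨rfl, rfl⟩ := he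
    simp only [QD, Set.mem_ofPred_eq] at h h'
    have ha : a ≠ 0 := by
      rintro rfl; exact hDsq ⟨b, by linarith⟩
    have : c = c' := by
      have : 4 * a * c = 4 * a * c' := by linarith
      exact mul_left_cancel₀ (by positivity : 4*a ≠ 0) this
    subst this; rfl
  refine (hsum.comp_injective hinj).congr ?_
  rintro ⟨⟨a,b,c⟩,h⟩
  simp only [QD, Set.mem_ofPred_eq] at h
  simp only [Function.comp, g]
  rw [if_pos]
  exact ⟨4*c, by linarith⟩


noncomputable def wlin (A B : ℂ) : ℂ →L[ℝ] ℂ :=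
  A • (ContinuousLinearMap.id ℝ ℂ) + B • (Complex.conjCLE : ℂ →L[ℝ] ℂ)

lemma wlin_apply (A B z : ℂ) : wlin A B z = A * z + B * (starRingEnd ℂ) z := by
  simp [wlin]

def HasW (G : ℂ → ℂ) (A B : ℂ) (τ : ℂ) : Prop := HasFDerivAt G (wlin A B) τ

lemma HasW.congr_val {G : ℂ → ℂ} {A B A' B' τ : ℂ} (h : HasW G A B τ) (hA : A = A') (hB : B = B') :
    HasW G A' B' τ := by subst hA hB; exact h

lemma HasW.congr_fun {G G' : ℂ → ℂ} {A B τ : ℂ} (h : HasW G A B τ) {U : Set ℂ} (hU : IsOpen U)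
    (hτ : τ ∈ U) (he : ∀ z ∈ U, G' z = G z) : HasW G' A B τ :=
  HasFDerivAt.congr_of_eventuallyEq h (Filter.eventuallyEq_of_mem (hU.mem_nhds hτ) he)

lemma HasW.add {G H : ℂ → ℂ} {A B A' B' τ : ℂ} (h : HasW G A B τ) (h' : HasW H A' B' τ) :
    HasW (fun z => G z + H z) (A + A') (B + B') τ := by
  have := HasFDerivAt.add h h'
  refine HasFDerivAt.congr_fderiv this (ContinuousLinearMap.ext fun z => ?_)
  simp only [wlin_apply, add_apply]; ring

lemma HasW.sub {G H : ℂ → ℂ} {A B A' B' τ : ℂ} (h : HasW G A B τ) (h' : HasW H A' B' τ) :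
    HasW (fun z => G z - H z) (A - A') (B - B') τ := by
  have := HasFDerivAt.sub h h'
  refine HasFDerivAt.congr_fderiv this (ContinuousLinearMap.ext fun z => ?_)
  simp only [wlin_apply, sub_apply]; ring

lemma HasW.mul {G H : ℂ → ℂ} {A B A' B' τ : ℂ} (h : HasW G A B τ) (h' : HasW H A' B' τ) :
    HasW (fun z => G z * H z) (A * H τ + G τ * A') (B * H τ + G τ * B') τ := by
  have := HasFDerivAt.mul h h'
  refine HasFDerivAt.congr_fderiv this (ContinuousLinearMap.ext fun z => ?_)
  simp only [wlin_apply, add_apply, smul_apply, smul_eq_mul]; ring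

lemma HasW.hol {f : ℂ → ℂ} {f' τ : ℂ} (h : HasDerivAt f f' τ) : HasW f f' 0 τ := by
  have := h.hasFDerivAt.restrictScalars ℝ
  refine HasFDerivAt.congr_fderiv this (ContinuousLinearMap.ext fun z => ?_)
  simp [wlin_apply, mul_comm]

lemma HasW.const (c τ : ℂ) : HasW (fun _ => c) 0 0 τ := HasW.hol (hasDerivAt_const τ c)

lemma HasW.const_mul {G : ℂ → ℂ} {A B τ : ℂ} (c : ℂ) (h : HasW G A B τ) :
    HasW (fun z => c * G z) (c * A) (c * B) τ := by
  simpa using (HasW.const c τ).mul h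

lemma HasW.conj {G : ℂ → ℂ} {A B τ : ℂ} (h : HasW G A B τ) :
    HasW (fun z => (starRingEnd ℂ) (G z)) ((starRingEnd ℂ) B) ((starRingEnd ℂ) A) τ := by
  have := (Complex.conjCLE : ℂ →L[ℝ] ℂ).hasFDerivAt.comp τ h
  refine HasFDerivAt.congr_fderiv this (ContinuousLinearMap.ext fun z => ?_)
  simp [wlin_apply]; ring

lemma HasW.toHol {f : ℂ → ℂ} {A τ : ℂ} (h : HasW f A 0 τ) : HasDerivAt f A τ := by
  rw [hasDerivAt_iff_hasFDerivAt]
  apply hasFDerivAt_of_restrictScalars ℝ h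
  ext z; simp [wlin_apply, mul_comm]

/-- chain rule: real function of a real-valued function -/
lemma HasW.real_comp {g : ℝ → ℝ} {g' : ℝ} {v : ℂ → ℝ} {A B τ : ℂ}
    (h : HasW (fun z => (v z : ℂ)) A B τ) (hg : HasDerivAt g g' (v τ)) :
    HasW (fun z => ((g (v z) : ℝ) : ℂ)) (g' * A) (g' * B) τ := by
  have h1 : HasFDerivAt v (Complex.reCLM.comp (wlin A B)) τ := by
    have := Complex.reCLM.hasFDerivAt.comp τ h
    exact this
  have h2 := (Complex.ofRealCLM.hasFDerivAt (x := g (v τ))).comp τ (hg.hasFDerivAt.comp τ h1)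
  have h3 : ∀ z, ((wlin A B z).re : ℂ) = wlin A B z := by
    have h4 : HasFDerivAt (fun z => (v z : ℂ)) (Complex.ofRealCLM.comp (Complex.reCLM.comp (wlin A B))) τ :=
      (Complex.ofRealCLM.hasFDerivAt (x := v τ)).comp τ h1
    have := h4.unique h
    intro z
    exact DFunLike.congr_fun this z
  refine HasFDerivAt.congr_fderiv h2 (ContinuousLinearMap.ext fun z => ?_)
  simp only [ContinuousLinearMap.comp_apply]
  have := h3 z
  simp only [wlin_apply] at this ⊢
  simp only [Complex.reCLM_apply, Complex.ofRealCLM_apply, ContinuousLinearMap.toSpanSingleton_apply, smul_eq_mul, Complex.ofReal_mul]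
  rw [this]; ring

lemma HasW.dxx {G : ℂ → ℂ} {A B τ : ℂ} (h : HasW G A B τ) : dxx G τ = A + B := by
  unfold _root_.dxx
  have h1 : HasDerivAt (fun x : ℝ => ((x : ℂ) + (τ.im : ℂ) * Complex.I)) 1 τ.re := by
    simpa using (Complex.ofRealCLM.hasDerivAt (x := τ.re)).add_const ((τ.im : ℂ) * Complex.I)
  have h' : HasFDerivAt G (wlin A B) ((τ.re : ℂ) + (τ.im : ℂ) * Complex.I) := by
    rw [Complex.re_add_im]; exact h
  have := (HasFDerivAt.comp_hasDerivAt τ.re h' h1).deriv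
  simp only [wlin_apply, map_one, mul_one] at this
  exact this

lemma HasW.dyy {G : ℂ → ℂ} {A B τ : ℂ} (h : HasW G A B τ) : dyy G τ = Complex.I * (A - B) := by
  unfold _root_.dyy
  have h1 : HasDerivAt (fun x : ℝ => ((τ.re : ℂ) + (x : ℂ) * Complex.I)) Complex.I τ.im := by
    simpa using ((Complex.ofRealCLM.hasDerivAt (x := τ.im)).mul_const Complex.I).const_add (τ.re : ℂ)
  have h' : HasFDerivAt G (wlin A B) ((τ.re : ℂ) + (τ.im : ℂ) * Complex.I) := by
    rw [Complex.re_add_im]; exact h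
  have := (HasFDerivAt.comp_hasDerivAt τ.im h' h1).deriv
  simp only [wlin_apply, Complex.conj_I] at this
  refine Eq.trans this ?_
  ring

lemma HasW.wirD {G : ℂ → ℂ} {A B τ : ℂ} (h : HasW G A B τ) : wirD G τ = A := by
  unfold _root_.wirD
  rw [h.dxx, h.dyy]
  linear_combination (B - A) / 2 * Complex.I_sq

lemma HasW.wirDbar {G : ℂ → ℂ} {A B τ : ℂ} (h : HasW G A B τ) : wirDbar G τ = B := by
  unfold _root_.wirDbar
  rw [h.dxx, h.dyy]
  linear_combination (A - B) / 2 * Complex.I_sq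

lemma HasW.im (τ : ℂ) : HasW (fun z => ((z.im : ℝ) : ℂ)) (1/(2*Complex.I)) (-(1/(2*Complex.I))) τ := by
  have h1 := HasW.hol (hasDerivAt_id τ)
  have := (h1.sub h1.conj).const_mul (1/(2*Complex.I))
  refine (this.congr_val (by simp) (by simp)).congr_fun isOpen_univ (Set.mem_univ τ) ?_
  intro z _
  simp only [id]
  rw [Complex.sub_conj]
  push_cast
  field_simp

lemma HasW.pow {G : ℂ → ℂ} {A B τ : ℂ} (h : HasW G A B τ) (n : ℕ) :
    HasW (fun z => G z ^ n) (n * G τ ^ (n-1) * A) (n * G τ ^ (n-1) * B) τ := by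
  have := (HasDerivAt.hasFDerivAt (hasDerivAt_pow n (G τ))).restrictScalars ℝ
  have := this.comp τ h
  refine HasFDerivAt.congr_fderiv this (ContinuousLinearMap.ext fun z => ?_)
  simp [wlin_apply]; ring

/-- n-fold τ-derivative of `G` on `U` is `H`. -/
def WC (U : Set ℂ) : ℕ → (ℂ → ℂ) → (ℂ → ℂ) → Prop
  | 0, G, H => ∀ z ∈ U, G z = H z
  | n+1, G, H => ∃ G1 : ℂ → ℂ, (∀ z ∈ U, ∃ B, HasW G (G1 z) B z) ∧ WC U n G1 H

lemma WC.add {U : Set ℂ} (n : ℕ) : ∀ {G H G' H' : ℂ → ℂ}, WC U n G H → WC U n G' H' →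
    WC U n (fun z => G z + G' z) (fun z => H z + H' z) := by
  induction n with
  | zero => intro G H G' H' h h' z hz; simp only; rw [h z hz, h' z hz]
  | succ n ih =>
    rintro G H G' H' ⟨G1, h1, h2⟩ ⟨G1', h1', h2'⟩
    refine ⟨_, fun z hz => ?_, ih h2 h2'⟩
    obtain ⟨B, hB⟩ := h1 z hz
    obtain ⟨B', hB'⟩ := h1' z hz
    exact ⟨_, hB.add hB'⟩

lemma WC.mul_conj {U : Set ℂ} {g : ℂ → ℂ} (hU : IsOpen U) (hg : DifferentiableOn ℂ g U) (n : ℕ) : ∀ {G H : ℂ → ℂ}, WC U n G H →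
    WC U n (fun z => G z * (starRingEnd ℂ) (g z)) (fun z => H z * (starRingEnd ℂ) (g z)) := by
  induction n with
  | zero => intro G H h z hz; simp only; rw [h z hz]
  | succ n ih =>
    rintro G H ⟨G1, h1, h2⟩
    refine ⟨_, fun z hz => ?_, ih h2⟩
    obtain ⟨B, hB⟩ := h1 z hz
    have := hB.mul (HasW.hol (hg.differentiableAt (hU.mem_nhds hz)).hasDerivAt).conj
    exact ⟨_, this.congr_val (by simp) rfl⟩

lemma WC.const_mul {U : Set ℂ} (c : ℂ) (n : ℕ) : ∀ {G H : ℂ → ℂ}, WC U n G H →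
    WC U n (fun z => c * G z) (fun z => c * H z) := by
  induction n with
  | zero => intro G H h z hz; simp only; rw [h z hz]
  | succ n ih =>
    rintro G H ⟨G1, h1, h2⟩
    refine ⟨_, fun z hz => ?_, ih h2⟩
    obtain ⟨B, hB⟩ := h1 z hz
    exact ⟨_, hB.const_mul c⟩

lemma WC.zero {U : Set ℂ} (n : ℕ) : WC U n (fun _ => 0) (fun _ => 0) := by
  induction n with
  | zero => intro z _; rfl
  | succ n ih => exact ⟨_, fun z _ => ⟨_, HasW.const 0 z⟩, ih⟩

lemma WC.sum {U : Set ℂ} (n : ℕ) {ι : Type*} (s : Finset ι) (G H : ι → ℂ → ℂ) (h : ∀ i ∈ s, WC U n (G i) (H i)) :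
    WC U n (fun z => ∑ i ∈ s, G i z) (fun z => ∑ i ∈ s, H i z) := by
  classical
  induction s using Finset.induction_on with
  | empty => simpa using WC.zero n
  | insert a s ha ih =>
    simp only [Finset.sum_insert ha]
    exact (h a (by simp)).add n (ih (fun i hi => h i (by simp [hi])))

lemma WC.congr_right {U : Set ℂ} (n : ℕ) : ∀ {G H H' : ℂ → ℂ}, WC U n G H → (∀ z ∈ U, H z = H' z) → WC U n G H' := by
  induction n with
  | zero => intro G H H' h h' z hz; rw [h z hz, h' z hz]
  | succ n ih => 
    rintro G H H' ⟨G1, h1, h2⟩ h'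
    exact ⟨G1, h1, ih h2 h'⟩

lemma WC.congr_left {U : Set ℂ} (hU : IsOpen U) (n : ℕ)  {G G' H : ℂ → ℂ} (h : WC U n G H) (h' : ∀ z ∈ U, G' z = G z) : WC U n G' H := by
  cases n with
  | zero => intro z hz; rw [h' z hz, h z hz]
  | succ n => 
    obtain ⟨G1, h1, h2⟩ := h
    refine ⟨G1, fun z hz => ?_, h2⟩
    obtain ⟨B, hB⟩ := h1 z hz
    exact ⟨B, hB.congr_fun hU hz h'⟩

lemma WC.hol {U : Set ℂ} (hU : IsOpen U) (n : ℕ) : ∀ {f : ℂ → ℂ}, DifferentiableOn ℂ f U → WC U n f (deriv^[n] f) := by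
  induction n with
  | zero => intro f hf z _; rfl
  | succ n ih =>
    intro f hf
    refine ⟨deriv f, fun z hz => ⟨0, HasW.hol (hf.differentiableAt (hU.mem_nhds hz)).hasDerivAt⟩, ?_⟩
    exact ih (hf.deriv hU)

lemma WC.unique {U : Set ℂ} (hU : IsOpen U) (n : ℕ) : ∀ {G H H' : ℂ → ℂ}, WC U n G H → WC U n G H' →
    ∀ z ∈ U, H z = H' z := by
  induction n with
  | zero => intro G H H' h h' z hz; rw [← h z hz, ← h' z hz]
  | succ n ih =>
    rintro G H H' ⟨G1, h1, h2⟩ ⟨G1', h1', h2'⟩ z hz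
    have : ∀ z ∈ U, G1' z = G1 z := by
      intro z hz
      obtain ⟨B, hB⟩ := h1 z hz
      obtain ⟨B', hB'⟩ := h1' z hz
      rw [← hB.wirD, hB'.wirD]
    exact ih h2 (h2'.congr_left hU n (fun z hz => (this z hz).symm)) z hz

lemma WC.Dop {U : Set ℂ} (hU : IsOpen U) (n : ℕ) : ∀ {G H : ℂ → ℂ}, WC U n G H →
    ∀ z ∈ U, (Dop^[n] G) z = (1 / (2 * (Real.pi : ℂ) * Complex.I))^n * H z := by
  have key : ∀ (n : ℕ) (c : ℂ) (G G' H : ℂ → ℂ), (∀ z ∈ U, G' z = c * G z) → WC U n G H →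
      ∀ z ∈ U, (_root_.Dop^[n] G') z = c * ((1 / (2 * (Real.pi : ℂ) * Complex.I))^n * H z) := by
    intro n
    induction n with
    | zero => intro c G G' H h1 h2 z hz; simp [h1 z hz, h2 z hz]
    | succ n ih =>
      rintro c G G' H h1 ⟨G1, h2, h3⟩ z hz
      rw [Function.iterate_succ_apply]
      rw [ih (c * (1 / (2 * (Real.pi : ℂ) * Complex.I))) G1 (_root_.Dop G') H ?_ h3 z hz]
      · ring
      · intro z hz
        obtain ⟨B, hB⟩ := h2 z hz
        unfold _root_.Dop
        rw [((hB.const_mul c).congr_fun hU hz h1).wirD]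
        ring
  intro G H h z hz
  have := key n 1 G G H (by simp) h z hz
  simpa using this

open Metric

noncomputable def prim (c : ℂ) (g : ℂ → ℂ) (τ : ℂ) : ℂ :=
  (τ - c) * ∫ s in (0:ℝ)..1, g (c + s * (τ - c))

lemma seg_mem {c τ : ℂ} {r : ℝ} (hτ : τ ∈ ball c r) {s : ℝ} (hs : s ∈ Set.Icc (0:ℝ) 1) :
    c + s * (τ - c) ∈ ball c r := by
  have := (convex_ball c r) (mem_ball_self (pos_of_mem_ball hτ)) hτ (show 0 ≤ 1 - s by linarith [hs.2]) hs.1 (by ring)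
  convert this using 1
  simp only [Complex.real_smul]; push_cast; ring

lemma seg_cont {c τ : ℂ} {r : ℝ} (hτ : τ ∈ ball c r) {g : ℂ → ℂ} (hg : ContinuousOn g (ball c r)) :
    ContinuousOn (fun s : ℝ => g (c + s * (τ - c))) (Set.Icc 0 1) :=
  hg.comp (by fun_prop) (fun _ hs => seg_mem hτ hs)

lemma prim_congr {c : ℂ} {r : ℝ} {g g' : ℂ → ℂ} (h : ∀ z ∈ ball c r, g z = g' z) :
    ∀ z ∈ ball c r, prim c g z = prim c g' z := by
  intro z hz
  unfold prim
  congr 1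
  apply intervalIntegral.integral_congr
  intro s hs
  rw [Set.uIcc_of_le zero_le_one] at hs
  exact h _ (seg_mem hz hs)

lemma prim_hasDerivAt {c : ℂ} {r : ℝ} {g : ℂ → ℂ} (hg : DifferentiableOn ℂ g (ball c r)) :
    ∀ τ ∈ ball c r, HasDerivAt (prim c g) (g τ) τ := by
  obtain ⟨P, hP⟩ := hg.isExactOn_ball
  have key : ∀ τ ∈ ball c r, prim c g τ = P τ - P c := by
    intro τ hτ
    unfold prim
    rw [← intervalIntegral.integral_const_mul]
    have := intervalIntegral.integral_eq_sub_of_hasDerivAt (a := (0:ℝ)) (b := 1) (f := fun s : ℝ => P (c + s * (τ - c)))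
      (f' := fun s : ℝ => (τ - c) * g (c + s * (τ - c))) ?_ ?_
    · rw [this]; simp
    · intro s hs
      rw [Set.uIcc_of_le zero_le_one] at hs
      have h1 := hP _ (seg_mem hτ hs)
      have h2 : HasDerivAt (fun s : ℝ => c + s * (τ - c)) (τ - c) s := by
        simpa using ((Complex.ofRealCLM.hasDerivAt (x := s)).mul_const (τ - c)).const_add c
      have := h1.comp s h2
      rw [mul_comm]
      exact this
    · apply ContinuousOn.intervalIntegrable
      rw [Set.uIcc_of_le zero_le_one]
      exact continuousOn_const.mul (seg_cont hτ hg.continuousOn)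
  intro τ hτ
  exact ((hP τ hτ).sub_const (P c)).congr_of_eventuallyEq
    (Filter.eventuallyEq_of_mem (isOpen_ball.mem_nhds hτ) key)

lemma prim_diff {c : ℂ} {r : ℝ} {g : ℂ → ℂ} (hg : DifferentiableOn ℂ g (ball c r)) :
    DifferentiableOn ℂ (prim c g) (ball c r) := fun τ hτ =>
  (prim_hasDerivAt hg τ hτ).differentiableAt.differentiableWithinAt

lemma prim_bound {c : ℂ} {r : ℝ} {g : ℂ → ℂ} {M : ℝ} (hM : ∀ z ∈ ball c r, ‖g z‖ ≤ M) :
    ∀ τ ∈ ball c r, ‖prim c g τ‖ ≤ r * M := by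
  intro τ hτ
  unfold prim
  rw [norm_mul]
  have h1 : ‖τ - c‖ ≤ r := (mem_ball_iff_norm.mp hτ).le
  have h2 : ‖∫ s in (0:ℝ)..1, g (c + s * (τ - c))‖ ≤ M * |1 - 0| := by
    apply intervalIntegral.norm_integral_le_of_norm_le_const
    intro s hs
    rw [Set.uIoc_of_le zero_le_one] at hs
    exact hM _ (seg_mem hτ ⟨hs.1.le, hs.2⟩)
  simp only [sub_zero, abs_one, mul_one] at h2
  exact mul_le_mul h1 h2 (norm_nonneg _) ((norm_nonneg _).trans h1)

lemma prim_hasSum {ι : Type*} [Countable ι] {c : ℂ} {r : ℝ} {g : ι → ℂ → ℂ} {M : ι → ℝ} (hM : Summable M)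
    (hgM : ∀ i, ∀ z ∈ ball c r, ‖g i z‖ ≤ M i) (hg : ∀ i, DifferentiableOn ℂ (g i) (ball c r)) :
    ∀ τ ∈ ball c r, HasSum (fun i => prim c (g i) τ) (prim c (fun z => ∑' i, g i z) τ) := by
  intro τ hτ
  unfold prim
  apply HasSum.mul_left
  apply intervalIntegral.hasSum_integral_of_dominated_convergence (bound := fun i _ => M i)
  · intro i
    have := (seg_cont hτ (hg i).continuousOn).mono (Set.Ioc_subset_Icc_self)
    rw [Set.uIoc_of_le zero_le_one]
    exact this.aestronglyMeasurable measurableSet_Ioc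
  · intro i
    refine Filter.Eventually.of_forall (fun s hs => ?_)
    rw [Set.uIoc_of_le zero_le_one] at hs
    exact hgM i _ (seg_mem hτ ⟨hs.1.le, hs.2⟩)
  · exact Filter.Eventually.of_forall (fun s hs => hM)
  · simp
  · refine Filter.Eventually.of_forall (fun s hs => ?_)
    rw [Set.uIoc_of_le zero_le_one] at hs
    apply Summable.hasSum
    exact Summable.of_norm_bounded hM (fun i => hgM i _ (seg_mem hτ ⟨hs.1.le, hs.2⟩))

noncomputable def EN (c : ℂ) : ℕ → (ℂ → ℂ) → ℂ → ℂ
  | 0, g => fun τ => (starRingEnd ℂ) (prim c g τ)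
  | N+1, g => fun τ => (τ.im : ℂ)^(N+1) * (starRingEnd ℂ) (prim c g τ)
      - (Complex.I / 2 * (N+1)) * EN c N (prim c g) τ

lemma EN_congr {c : ℂ} {r : ℝ} (N : ℕ) : ∀ {g g' : ℂ → ℂ} (_ : ∀ z ∈ ball c r, g z = g' z),
    ∀ z ∈ ball c r, EN c N g z = EN c N g' z := by
  induction N with
  | zero => intro g g' h z hz; simp only [EN]; rw [prim_congr h z hz]
  | succ N ih => intro g g' h z hz; simp only [EN]; rw [prim_congr h z hz, ih (prim_congr h) z hz]

lemma EN_hasW {c : ℂ} {r : ℝ} (N : ℕ) : ∀ {g : ℂ → ℂ} (_ : DifferentiableOn ℂ g (ball c r)),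
    ∀ τ ∈ ball c r, HasW (EN c N g) (N / (2 * Complex.I) * EN c (N-1) g τ) ((τ.im : ℂ)^N * (starRingEnd ℂ) (g τ)) τ := by
  induction N with
  | zero =>
    intro g hg τ hτ
    exact (HasW.hol (prim_hasDerivAt hg τ hτ)).conj.congr_val (by simp) (by simp)
  | succ N ih =>
    intro g hg τ hτ
    have h1 := (HasW.hol (prim_hasDerivAt hg τ hτ)).conj
    have h2 := (((HasW.im τ).pow (N+1)).mul h1).sub ((ih (prim_diff hg) τ hτ).const_mul (Complex.I / 2 * (N+1)))
    refine h2.congr_val ?_ ?_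
    · cases N with
      | zero => simp [EN]
      | succ N =>
        simp only [EN, Nat.add_sub_cancel, map_zero, mul_zero, add_zero]
        push_cast
        ring
    · simp only [Nat.add_sub_cancel]
      push_cast
      have : (1 / (2 * Complex.I)) = - Complex.I / 2 := by
        field_simp; simp
      rw [this]; ring

lemma EN_WC {c : ℂ} {r : ℝ} {g : ℂ → ℂ} (hg : DifferentiableOn ℂ g (ball c r)) (N : ℕ) :
    WC (ball c r) (N+1) (EN c N g) (fun _ => 0) := by
  induction N with
  | zero =>
    refine ⟨fun _ => 0, fun z hz => ⟨_, (EN_hasW 0 hg z hz).congr_val (by simp) rfl⟩, WC.zero 0⟩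
  | succ N ih =>
    refine ⟨_, fun z hz => ⟨_, (EN_hasW (N+1) hg z hz)⟩, ?_⟩
    simp only [Nat.add_sub_cancel]
    simpa using WC.const_mul ((((N+1:ℕ)):ℂ) / (2 * Complex.I)) (N+1) ih

lemma EN_bound (c : ℂ) (r : ℝ) (N : ℕ) : ∃ C : ℝ, ∀ (g : ℂ → ℂ) (M : ℝ), (∀ z ∈ ball c r, ‖g z‖ ≤ M) →
    ∀ τ ∈ ball c r, ‖EN c N g τ‖ ≤ C * M := by
  induction N with
  | zero =>
    refine ⟨r, fun g M hM τ hτ => ?_⟩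
    simp only [EN, RCLike.norm_conj]
    exact prim_bound hM τ hτ
  | succ N ih =>
    obtain ⟨C, hC⟩ := ih
    refine ⟨(|c.im| + r)^(N+1) * r + ‖Complex.I / 2 * ((N:ℂ)+1)‖ * (C * r), fun g M hM τ hτ => ?_⟩
    simp only [EN]
    have h1 := prim_bound hM τ hτ
    have h2 := hC _ _ (prim_bound hM) τ hτ
    have h3 : |τ.im| ≤ |c.im| + r := by
      have : |τ.im - c.im| ≤ ‖τ - c‖ := by simpa using Complex.abs_im_le_norm (τ - c)
      have h4 : ‖τ - c‖ ≤ r := (mem_ball_iff_norm.mp hτ).le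
      have := abs_add_le (τ.im - c.im) c.im
      simp only [sub_add_cancel] at this
      linarith
    refine (norm_sub_le _ _).trans ?_
    rw [norm_mul, norm_mul, RCLike.norm_conj, norm_pow, Complex.norm_real, Real.norm_eq_abs]
    calc _ ≤ (|c.im| + r)^(N+1) * (r * M) + ‖Complex.I / 2 * ((N:ℂ)+1)‖ * (C * (r * M)) := by
          gcongr
          exact pow_nonneg ((abs_nonneg _).trans h3) _
      _ = _ := by ring

lemma EN_hasSum {ι : Type*} [Countable ι] {c : ℂ} {r : ℝ} (N : ℕ) : ∀ {g : ι → ℂ → ℂ} {M : ι → ℝ} (_ : Summable M)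
    (_ : ∀ i, ∀ z ∈ ball c r, ‖g i z‖ ≤ M i) (_ : ∀ i, DifferentiableOn ℂ (g i) (ball c r)),
    ∀ τ ∈ ball c r, HasSum (fun i => EN c N (g i) τ) (EN c N (fun z => ∑' i, g i z) τ) := by
  have hconj : ∀ {f : ι → ℂ} {a : ℂ}, HasSum f a → HasSum (fun i => (starRingEnd ℂ) (f i)) ((starRingEnd ℂ) a) := by
    intro f a h
    exact h.map (starRingEnd ℂ) Complex.continuous_conj
  induction N with
  | zero =>
    intro g M hM hgM hg τ hτ
    simp only [EN]
    exact hconj (prim_hasSum hM hgM hg τ hτ)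
  | succ N ih =>
    intro g M hM hgM hg τ hτ
    simp only [EN]
    have h1 := ih (hM.mul_left r) (fun i => prim_bound (hgM i)) (fun i => prim_diff (hg i)) τ hτ
    rw [EN_congr N (fun z hz => (prim_hasSum hM hgM hg z hz).tsum_eq) τ hτ] at h1
    exact ((hconj (prim_hasSum hM hgM hg τ hτ)).mul_left _).sub (h1.mul_left _)

/-- Weierstrass: iterated derivative of a normally convergent series of holomorphic functions. -/
lemma iter_deriv_congr {U : Set ℂ} (hU : IsOpen U) (n : ℕ) : ∀ {f g : ℂ → ℂ} (_ : ∀ z ∈ U, f z = g z),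
    ∀ z ∈ U, (deriv^[n] f) z = (deriv^[n] g) z := by
  induction n with
  | zero => intro f g h z hz; exact h z hz
  | succ n ih =>
    intro f g h z hz
    rw [Function.iterate_succ_apply, Function.iterate_succ_apply]
    refine ih (fun w hw => ?_) z hz
    exact Filter.EventuallyEq.deriv_eq (Filter.eventuallyEq_of_mem (hU.mem_nhds hw) h)

lemma iter_deriv_hasSum {ι : Type*} {c : ℂ} (n : ℕ) : ∀ {r : ℝ} (_ : 0 < r) {f : ι → ℂ → ℂ} {M : ι → ℝ} (_ : Summable M)
    (_ : ∀ i, ∀ z ∈ ball c r, ‖f i z‖ ≤ M i) (_ : ∀ i, DifferentiableOn ℂ (f i) (ball c r)),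
    HasSum (fun i => (deriv^[n] (f i)) c) ((deriv^[n] (fun z => ∑' i, f i z)) c) := by
  induction n with
  | zero =>
    intro r hr f M hM hf _
    exact (Summable.of_norm_bounded hM (fun i => hf i _ (mem_ball_self hr))).hasSum
  | succ n ih =>
    intro r hr f M hM hf hd
    have h1 : ∀ z ∈ ball c r, HasSum (fun i => deriv (f i) z) (deriv (fun z => ∑' i, f i z) z) := by
      intro z hz
      exact Complex.hasSum_deriv_of_summable_norm hM hd isOpen_ball hf hz
    have hr2 : 0 < r/2 := by positivity
    have hsub : ball c (r/2) ⊆ ball c r := ball_subset_ball (by linarith)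
    have h2 := ih (r := r/2) hr2 (f := fun i => deriv (f i)) (M := fun i => M i / (r/4)) (hM.div_const _) ?_ ?_
    · simp only [Function.iterate_succ_apply]
      rw [iter_deriv_congr isOpen_ball n (fun z hz => (h1 z (hsub hz)).tsum_eq) c (mem_ball_self hr2)] at h2
      exact h2
    · intro i z hz
      have hsub2 : closedBall z (r/4) ⊆ ball c r := by
        intro w hw
        have := dist_triangle w z c
        rw [mem_closedBall] at hw
        rw [mem_ball] at hz ⊢
        linarith
      apply Complex.norm_deriv_le_of_forall_mem_sphere_norm_le (by positivity)
      · exact ((hd i).mono hsub2).diffContOnCl_ball (subset_rfl)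
      · intro w hw
        exact hf i w (hsub2 (sphere_subset_closedBall hw))
    · intro i
      exact ((hd i).deriv isOpen_ball).mono hsub

open Metric

lemma hasDerivAt_cg {f g : ℂ → ℂ} {f' g' z : ℂ} (h : HasDerivAt f f' z) (hfg : ∀ w, g w = f w)
    (hd : g' = f') : HasDerivAt g g' z := by
  have : g = f := funext hfg
  rw [this, hd]; exact h

lemma poly_iter_deriv (p : Polynomial ℂ) (n : ℕ) :
    deriv^[n] (fun z => p.eval z) = fun z => ((Polynomial.derivative^[n] p).eval z) := by
  induction n generalizing p with
  | zero => rfl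
  | succ n ih =>
    rw [Function.iterate_succ_apply, Function.iterate_succ_apply, ← ih]
    congr 1
    ext z; exact Polynomial.deriv p

lemma lin_iter_deriv (α β e : ℂ) (m j : ℕ) (hj : j ≤ 2*m) :
    deriv^[2*m+1] (fun z => e * ((z - α)^j * (z - β)^(2*m-j))) = fun _ => 0 := by
  have h : (fun z => e * ((z - α)^j * (z - β)^(2*m-j))) = fun z =>
      (Polynomial.C e * ((Polynomial.X - Polynomial.C α)^j * (Polynomial.X - Polynomial.C β)^(2*m-j))).eval z := by
    ext z; simp
  rw [h, poly_iter_deriv, Polynomial.iterate_derivative_eq_zero]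
  · simp
  · refine lt_of_le_of_lt (Polynomial.natDegree_C_mul_le _ _) ?_
    refine lt_of_le_of_lt Polynomial.natDegree_mul_le ?_
    have h1 := Polynomial.natDegree_pow_le (p := (Polynomial.X - Polynomial.C α)) (n := j)
    have h2 := Polynomial.natDegree_pow_le (p := (Polynomial.X - Polynomial.C β)) (n := 2*m-j)
    rw [Polynomial.natDegree_X_sub_C] at h1 h2
    omega

lemma diffOn_iter {U : Set ℂ} (hU : IsOpen U) (n : ℕ) : ∀ {f : ℂ → ℂ}, DifferentiableOn ℂ f U → DifferentiableOn ℂ (deriv^[n] f) U := by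
  induction n with
  | zero => intro f hf; exact hf
  | succ n ih => intro f hf; exact ih (hf.deriv hU)

lemma quad_leibniz {U : Set ℂ} (hU : IsOpen U) (a b c : ℂ) {g : ℂ → ℂ} (hg : DifferentiableOn ℂ g U) (n : ℕ) :
    ∀ z ∈ U, (deriv^[n+2] (fun z => (a*z^2+b*z+c) * g z)) z =
      (a*z^2+b*z+c) * (deriv^[n+2] g) z + (n+2) * (2*a*z+b) * (deriv^[n+1] g) z
        + (n+2)*(n+1)*a*(deriv^[n] g) z := by
  have hq : ∀ z, HasDerivAt (fun z : ℂ => a*z^2+b*z+c) (2*a*z+b) z := by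
    intro z
    have := (((hasDerivAt_pow 2 z).const_mul a).add ((hasDerivAt_id z).const_mul b)).add_const c
    refine hasDerivAt_cg this (fun w => by simp) ?_
    simp; ring
  have hl : ∀ z, HasDerivAt (fun z : ℂ => 2*a*z+b) (2*a) z := by
    intro z
    have := ((hasDerivAt_id z).const_mul (2*a)).add_const b
    refine hasDerivAt_cg this (fun w => by simp) ?_
    simp
  have hd : ∀ n, ∀ z ∈ U, HasDerivAt (deriv^[n] g) ((deriv^[n+1] g) z) z := by
    intro n z hz
    rw [Function.iterate_succ_apply']
    exact ((diffOn_iter hU n hg).differentiableAt (hU.mem_nhds hz)).hasDerivAt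
  have h1 : ∀ z ∈ U, deriv (fun z => (a*z^2+b*z+c) * g z) z = (2*a*z+b) * g z + (a*z^2+b*z+c) * (deriv^[1] g) z := by
    intro z hz
    exact ((hq z).mul (hd 0 z hz)).deriv
  have hcong : ∀ {F G : ℂ → ℂ} {z w : ℂ}, z ∈ U → (∀ z ∈ U, F z = G z) → HasDerivAt G w z → deriv F z = w := by
    intro F G z w hz h hG
    rw [← hG.deriv]
    exact Filter.EventuallyEq.deriv_eq (Filter.eventuallyEq_of_mem (hU.mem_nhds hz) h)
  induction n with
  | zero =>
    intro z hz
    rw [zero_add, Function.iterate_succ_apply']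
    refine hcong hz h1 ?_
    have := ((hl z).mul (hd 0 z hz)).add ((hq z).mul (hd 1 z hz))
    refine hasDerivAt_cg this (fun w => by simp only [Pi.add_apply, Pi.mul_apply, Function.iterate_zero, id]) ?_
    simp only [Function.iterate_zero, id, Nat.cast_zero, zero_add]; ring
  | succ n ih =>
    intro z hz
    rw [show n+1+2 = (n+2)+1 by ring, Function.iterate_succ_apply']
    refine hcong hz ih ?_
    have := ((hq z).mul (hd (n+2) z hz)).add (((hl z).mul (hd (n+1) z hz)).const_mul ((n:ℂ)+2))
    have := this.add ((hd n z hz).const_mul (((n:ℂ)+2)*(n+1)*a))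
    refine hasDerivAt_cg this (fun w => ?_) ?_
    · simp only [Pi.add_apply, Pi.mul_apply]; ring
    · push_cast; ring

lemma bol_log {U : Set ℂ} (hU : IsOpen U) (a b c : ℂ) {L : ℂ → ℂ} (hQ : ∀ z ∈ U, a*z^2+b*z+c ≠ 0)
    (hL : ∀ z ∈ U, HasDerivAt L (a*z^2+b*z+c)⁻¹ z) (m : ℕ) :
    ∀ z ∈ U, (deriv^[2*m+1] (fun z => (a*z^2+b*z+c)^m * L z)) z =
      (-(b^2-4*a*c))^m * (Nat.factorial m : ℂ)^2 * ((a*z^2+b*z+c)⁻¹)^(m+1) := by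
  have hLd : DifferentiableOn ℂ L U := fun z hz => (hL z hz).differentiableAt.differentiableWithinAt
  have hq : ∀ z, HasDerivAt (fun z : ℂ => a*z^2+b*z+c) (2*a*z+b) z := by
    intro z
    have := (((hasDerivAt_pow 2 z).const_mul a).add ((hasDerivAt_id z).const_mul b)).add_const c
    refine hasDerivAt_cg this (fun w => by simp) ?_
    simp; ring
  have hl : ∀ z, HasDerivAt (fun z : ℂ => 2*a*z+b) (2*a) z := by
    intro z
    have := ((hasDerivAt_id z).const_mul (2*a)).add_const b
    refine hasDerivAt_cg this (fun w => by simp) ?_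
    simp
  have hinv : ∀ (n : ℕ), ∀ z ∈ U, HasDerivAt (fun z : ℂ => ((a*z^2+b*z+c)⁻¹)^(n+1))
      (-(n+1) * (2*a*z+b) * ((a*z^2+b*z+c)⁻¹)^(n+2)) z := by
    intro n z hz
    have := ((hq z).inv (hQ z hz)).pow (n+1)
    refine hasDerivAt_cg this (fun w => by simp only [Pi.pow_apply, Pi.inv_apply]) ?_
    have := hQ z hz
    simp only [Nat.add_sub_cancel, Pi.inv_apply]
    push_cast
    rw [pow_add, div_eq_mul_inv, ← inv_pow]
    ring
  have hcong : ∀ {F G : ℂ → ℂ} {z w : ℂ}, z ∈ U → (∀ z ∈ U, F z = G z) → HasDerivAt G w z → deriv F z = w := by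
    intro F G z w hz h hG
    rw [← hG.deriv]
    exact Filter.EventuallyEq.deriv_eq (Filter.eventuallyEq_of_mem (hU.mem_nhds hz) h)
  induction m with
  | zero =>
    intro z hz
    simpa using (hL z hz).deriv
  | succ m ih =>
    set κ : ℂ := (-(b^2-4*a*c))^m * (Nat.factorial m : ℂ)^2 with hκ
    intro z hz
    have hg : DifferentiableOn ℂ (fun z => (a*z^2+b*z+c)^m * L z) U := by
      apply DifferentiableOn.mul _ hLd
      fun_prop
    have e1 : ∀ z ∈ U, (deriv^[2*m+2] (fun z => (a*z^2+b*z+c)^m * L z)) z =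
        κ * (-(m+1) * (2*a*z+b) * ((a*z^2+b*z+c)⁻¹)^(m+2)) := by
      intro z hz
      rw [Function.iterate_succ_apply']
      exact hcong hz ih ((hinv m z hz).const_mul κ)
    have e2 : ∀ z ∈ U, (deriv^[2*m+3] (fun z => (a*z^2+b*z+c)^m * L z)) z =
        κ * (-(m+1) * (2*a * ((a*z^2+b*z+c)⁻¹)^(m+2) +
          (2*a*z+b) * (-(m+1+1) * (2*a*z+b) * ((a*z^2+b*z+c)⁻¹)^(m+3)))) := by
      intro z hz
      rw [Function.iterate_succ_apply']
      refine hcong hz e1 ?_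
      have := (((hl z).mul (hinv (m+1) z hz)).const_mul (-((m:ℂ)+1))).const_mul κ
      refine hasDerivAt_cg this (fun w => ?_) ?_
      · simp only [Pi.mul_apply]; ring
      · push_cast; ring
    have e3 := quad_leibniz hU a b c hg (2*m+1) z hz
    have e4 : (fun z => (a*z^2+b*z+c)^(m+1) * L z) = (fun z => (a*z^2+b*z+c) * ((a*z^2+b*z+c)^m * L z)) := by
      funext z; ring
    rw [e4, show 2*(m+1)+1 = 2*m+1+2 by ring, e3]
    rw [show 2*m+1+2 = 2*m+3 by ring, e2 z hz, show 2*m+1+1 = 2*m+2 by ring, e1 z hz, ih z hz]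
    rw [Nat.factorial_succ]
    have h5 : (-(b^2-4*a*c))^(m+1) * (((m+1) * Nat.factorial m : ℕ) : ℂ)^2 = κ * (-(m+1)^2 * (b^2-4*a*c)) := by
      rw [hκ]; push_cast; ring
    rw [h5]
    have h6 := hQ z hz
    generalize hX : a*z^2+b*z+c = X at *
    have h7 : (2*a*z+b)^2 = b^2-4*a*c + 4*a*X := by rw [← hX]; ring
    push_cast
    have h8 : X * X⁻¹ = 1 := mul_inv_cancel₀ h6
    have h9 : ∀ n, X * (X⁻¹)^(n+1) = (X⁻¹)^n := by intro n; rw [pow_succ]; linear_combination (X⁻¹)^n * h8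
    have h10 := h9 (m+1)
    have h11 := h9 (m+2)
    have h12 := h9 m
    rw [show m+1+1 = m+2 by ring] at *
    rw [show m+2+1 = m+3 by ring] at *
    generalize X⁻¹ ^ (m+3) = Y3 at *
    generalize X⁻¹ ^ (m+2) = Y2 at *
    generalize X⁻¹ ^ (m+1) = Y1 at *
    rw [← h10, ← h11]
    linear_combination (κ * X * Y3 * (m+1) * (m+2) - κ * (X * Y3) * (2*m+3)*(m+1)) * h7

open Metric

lemma psi_integrand_cont (k : ℕ) (hk : 2 ≤ k) {v : ℝ} (hv : v < 1) :
    ContinuousOn (fun u : ℝ => u ^ ((k : ℝ) - 3 / 2) * (1 - u) ^ (-(1:ℝ) / 2)) (Set.Iic v) := by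
  have hk' : (2:ℝ) ≤ k := by exact_mod_cast hk
  apply ContinuousOn.mul
  · exact continuousOn_id.rpow_const (fun x _ => Or.inr (by linarith))
  · refine ContinuousOn.rpow_const (by fun_prop) (fun x hx => Or.inl ?_)
    have : x ≤ v := hx
    linarith

lemma psi_hasDerivAt (k : ℕ) (hk : 2 ≤ k) {v : ℝ} (h0 : 0 < v) (hv : v < 1) :
    HasDerivAt (psi k) (1/2 * (v ^ ((k : ℝ) - 3 / 2) * (1 - v) ^ (-(1:ℝ) / 2))) v := by
  unfold psi
  apply HasDerivAt.const_mul
  have hc := psi_integrand_cont k hk (v := (v+1)/2) (by linarith)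
  have hn : Set.Iic ((v+1)/2) ∈ nhds v := Iic_mem_nhds (by linarith)
  apply intervalIntegral.integral_hasDerivAt_right
  · apply ContinuousOn.intervalIntegrable
    refine hc.mono ?_
    intro x hx
    rw [Set.uIcc_of_le h0.le] at hx
    have := hx.2
    simp only [Set.mem_Iic]; linarith
  · refine ContinuousOn.stronglyMeasurableAtFilter (s := Set.Iio ((v+1)/2)) isOpen_Iio ?_ v ?_
    · exact hc.mono Set.Iio_subset_Iic_self
    · simp only [Set.mem_Iio]; linarith
  · exact hc.continuousAt hn

lemma psi_bound (k : ℕ) (hk : 2 ≤ k) {v : ℝ} (h0 : 0 < v) (hv : v < 1) :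
    |psi k v| ≤ v ^ ((k : ℝ) - 3 / 2) * v := by
  have hk' : (2:ℝ) ≤ k := by exact_mod_cast hk
  have hc := psi_integrand_cont k hk hv
  have hsub : Set.uIcc 0 v ⊆ Set.Iic v := by
    rw [Set.uIcc_of_le h0.le]; exact fun x hx => hx.2
  have hg : ContinuousOn (fun u : ℝ => (1 - u) ^ (-(1:ℝ) / 2)) (Set.Iic v) := by
    refine ContinuousOn.rpow_const (by fun_prop) (fun x hx => Or.inl ?_)
    have : x ≤ v := hx
    linarith
  have hi : IntervalIntegrable (fun u : ℝ => u ^ ((k : ℝ) - 3 / 2) * (1 - u) ^ (-(1:ℝ) / 2)) MeasureTheory.volume 0 v :=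
    (hc.mono hsub).intervalIntegrable
  have hi2 : IntervalIntegrable (fun u : ℝ => v ^ ((k : ℝ) - 3 / 2) * (1 - u) ^ (-(1:ℝ) / 2)) MeasureTheory.volume 0 v :=
    ((hg.mono hsub).intervalIntegrable).const_mul _
  have e1 : ∫ u in (0:ℝ)..v, (1 - u) ^ (-(1:ℝ) / 2) = 2 - 2 * Real.sqrt (1 - v) := by
    have := intervalIntegral.integral_eq_sub_of_hasDerivAt (a := 0) (b := v)
      (f := fun u => -2 * Real.sqrt (1 - u)) (f' := fun u => (1 - u) ^ (-(1:ℝ) / 2)) ?_ ((hg.mono hsub).intervalIntegrable)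
    · rw [this]; simp; ring
    · intro x hx
      have hx1 : x ≤ v := hsub hx
      have hp : 0 < 1 - x := by linarith
      have h1 : HasDerivAt (fun u : ℝ => 1 - u) (-1) x := by
        simpa using (hasDerivAt_id x).const_sub 1
      have h2 := (h1.sqrt hp.ne').const_mul (-2)
      refine h2.congr_deriv ?_
      rw [show (-(1:ℝ)/2) = -(1/2) by norm_num, Real.rpow_neg hp.le, ← Real.sqrt_eq_rpow]
      have := Real.sqrt_pos.2 hp
      field_simp
  have h1 : 0 ≤ ∫ u in (0:ℝ)..v, u ^ ((k : ℝ) - 3 / 2) * (1 - u) ^ (-(1:ℝ) / 2) := by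
    apply intervalIntegral.integral_nonneg h0.le
    intro u hu
    exact mul_nonneg (Real.rpow_nonneg hu.1 _) (Real.rpow_nonneg (by linarith [hu.2]) _)
  have h2 : ∫ u in (0:ℝ)..v, u ^ ((k : ℝ) - 3 / 2) * (1 - u) ^ (-(1:ℝ) / 2) ≤
      ∫ u in (0:ℝ)..v, v ^ ((k : ℝ) - 3 / 2) * (1 - u) ^ (-(1:ℝ) / 2) := by
    apply intervalIntegral.integral_mono_on h0.le hi hi2
    intro u hu
    apply mul_le_mul_of_nonneg_right _ (Real.rpow_nonneg (by linarith [hu.2]) _)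
    exact Real.rpow_le_rpow hu.1 hu.2 (by linarith)
  rw [intervalIntegral.integral_const_mul, e1] at h2
  unfold psi
  rw [abs_of_nonneg (by positivity)]
  have h3 : 1 - v ≤ Real.sqrt (1 - v) := by
    apply Real.le_sqrt_of_sq_le
    nlinarith
  have h4 : 0 ≤ v ^ ((k : ℝ) - 3 / 2) := Real.rpow_nonneg h0.le _
  nlinarith [mul_nonneg h4 (sub_nonneg.2 h3)]

/-- basic facts on a quadratic form -/
lemma normSq_Qval {D : ℤ} {q : ℤ × ℤ × ℤ} (hq : q ∈ QD D) (z : ℂ) :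
    Complex.normSq (Qval q z) = (Qell q z)^2 + D * z.im^2 := by
  have h : (q.2.1 : ℝ)^2 - 4 * q.1 * q.2.2 = D := by exact_mod_cast hq
  rw [← h]
  simp only [Qval, Qell, Complex.normSq_apply, Complex.add_re, Complex.add_im, Complex.mul_re, Complex.mul_im,
    Complex.intCast_re, Complex.intCast_im, pow_two]
  ring

lemma Qval_ne {D : ℤ} (hD : 0 < D) {q : ℤ × ℤ × ℤ} (hq : q ∈ QD D) {z : ℂ} (hz : 0 < z.im) : Qval q z ≠ 0 := by
  intro h
  have := normSq_Qval hq z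
  rw [h, map_zero] at this
  have hD' : (0:ℝ) < D := by exact_mod_cast hD
  have : 0 < (Qell q z)^2 + D * z.im^2 := by positivity
  linarith

lemma Qval_hasDerivAt (q : ℤ × ℤ × ℤ) (z : ℂ) :
    HasDerivAt (Qval q) (2 * (q.1:ℂ) * z + (q.2.1 : ℂ)) z := by
  have := (((hasDerivAt_pow 2 z).const_mul (q.1:ℂ)).add ((hasDerivAt_id z).const_mul (q.2.1:ℂ))).add_const (q.2.2:ℂ)
  refine hasDerivAt_cg this (fun w => by simp [Qval]) ?_
  simp; ring

lemma Qval_sub (q : ℤ × ℤ × ℤ) (z : ℂ) :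
    Qval q z - Complex.I * z.im * (2 * (q.1:ℂ) * z + (q.2.1 : ℂ)) = (Qell q z : ℂ) := by
  apply Complex.ext <;>
  simp [Qval, Qell, Complex.normSq_apply, pow_two]  <;> ring

lemma Qell_cont (q : ℤ × ℤ × ℤ) : Continuous (Qell q) := by
  unfold Qell
  have := Complex.continuous_normSq
  have := Complex.continuous_re
  fun_prop

/-- the argument of psi -/
noncomputable def vfun (D : ℤ) (q : ℤ × ℤ × ℤ) (z : ℂ) : ℝ := (D : ℝ) * z.im ^ 2 / Complex.normSq (Qval q z)

lemma vfun_eq (D : ℤ) (q : ℤ × ℤ × ℤ) (z : ℂ) :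
    ((vfun D q z : ℝ) : ℂ) = D * (z.im:ℂ)^2 * ((Qval q z)⁻¹ * (starRingEnd ℂ) ((Qval q z)⁻¹)) := by
  unfold vfun
  rw [map_inv₀, ← mul_inv, Complex.mul_conj]
  push_cast
  rw [div_eq_mul_inv]

lemma vfun_pos {D : ℤ} (hD : 0 < D) {q : ℤ × ℤ × ℤ} (hq : q ∈ QD D) {z : ℂ} (hz : 0 < z.im) : 0 < vfun D q z := by
  unfold vfun
  have := Complex.normSq_pos.2 (Qval_ne hD hq hz)
  have hD' : (0:ℝ) < D := by exact_mod_cast hD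
  positivity

lemma one_sub_vfun {D : ℤ} (hD : 0 < D) {q : ℤ × ℤ × ℤ} (hq : q ∈ QD D) {z : ℂ} (hz : 0 < z.im) :
    1 - vfun D q z = (Qell q z)^2 / Complex.normSq (Qval q z) := by
  unfold vfun
  have := Complex.normSq_pos.2 (Qval_ne hD hq hz)
  rw [eq_div_iff this.ne', sub_mul, div_mul_cancel₀ _ this.ne', normSq_Qval hq]
  ring

lemma vfun_lt {D : ℤ} (hD : 0 < D) {q : ℤ × ℤ × ℤ} (hq : q ∈ QD D) {z : ℂ} (hz : 0 < z.im) (hs : Qell q z ≠ 0) :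
    vfun D q z < 1 := by
  have h := one_sub_vfun hD hq hz
  have := Complex.normSq_pos.2 (Qval_ne hD hq hz)
  have : 0 < (Qell q z)^2 / Complex.normSq (Qval q z) := by positivity
  linarith

lemma vfun_hasW {D : ℤ} (hD : 0 < D) {q : ℤ × ℤ × ℤ} (hq : q ∈ QD D) {z : ℂ} (hz : 0 < z.im) :
    HasW (fun z => ((vfun D q z : ℝ) : ℂ))
      (-Complex.I * D * z.im * Qell q z * ((Qval q z)⁻¹^2 * (starRingEnd ℂ) (Qval q z)⁻¹))
      (Complex.I * D * z.im * Qell q z * ((Qval q z)⁻¹ * (starRingEnd ℂ) (Qval q z)⁻¹^2)) z := by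
  have hne := Qval_ne hD hq hz
  have h1 : HasW (fun z => (Qval q z)⁻¹) (-(2 * (q.1:ℂ) * z + (q.2.1 : ℂ)) / (Qval q z)^2) 0 z :=
    HasW.hol ((Qval_hasDerivAt q z).inv hne)
  have h2 := (((HasW.im z).pow 2).const_mul (D:ℂ)).mul (h1.mul h1.conj)
  have hI : (1:ℂ)/(2*Complex.I) = -Complex.I/2 := by
    field_simp; simp
  have hs := Qval_sub q z
  have hs' := congrArg (starRingEnd ℂ) hs
  simp only [map_sub, map_mul, Complex.conj_ofReal, Complex.conj_I] at hs'
  have hne' : (starRingEnd ℂ) (Qval q z) ≠ 0 := by simpa using hne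
  generalize (2 * (q.1:ℂ) * z + (q.2.1 : ℂ)) = w at *
  refine (h2.congr_val ?_ ?_).congr_fun isOpen_univ (Set.mem_univ z) (fun w _ => vfun_eq D q w)
  · rw [hI, ← hs]
    simp only [map_inv₀, map_zero]
    field_simp
    simp
    linear_combination (2 * D * (z.im:ℂ) * (z.im:ℂ) * w) * (-Complex.I_sq)
  · rw [hI, ← hs']
    simp only [map_inv₀, map_div₀, map_neg, map_pow]
    field_simp
    simp
    linear_combination (2 * D * (z.im:ℂ) * (z.im:ℂ) * (starRingEnd ℂ) w) * (-Complex.I_sq)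

open Metric

lemma psi_der_eq (k : ℕ) (hk : 2 ≤ k) {D : ℤ} (hD : 0 < D) {q : ℤ × ℤ × ℤ} (hq : q ∈ QD D) {z : ℂ} (hz : 0 < z.im)
    (hs : Qell q z ≠ 0) :
    1/2 * ((vfun D q z) ^ ((k : ℝ) - 3 / 2) * (1 - vfun D q z) ^ (-(1:ℝ) / 2)) =
      1/2 * (vfun D q z)^(k-1) * (Complex.normSq (Qval q z) / (Real.sqrt D * z.im * |Qell q z|)) := by
  have hv := vfun_pos hD hq hz
  have hv1 := vfun_lt hD hq hz hs
  have hn := Complex.normSq_pos.2 (Qval_ne hD hq hz)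
  have hD' : (0:ℝ) < D := by exact_mod_cast hD
  have e1 : (vfun D q z) ^ ((k : ℝ) - 3 / 2) = (vfun D q z)^(k-1) * (Real.sqrt (vfun D q z))⁻¹ := by
    rw [Real.sqrt_eq_rpow, ← Real.rpow_neg hv.le, ← Real.rpow_natCast, ← Real.rpow_add hv]
    congr 1
    push_cast [Nat.cast_sub (show 1 ≤ k by omega)]
    ring
  have e2 : (1 - vfun D q z) ^ (-(1:ℝ) / 2) = (Real.sqrt (1 - vfun D q z))⁻¹ := by
    rw [show (-(1:ℝ)/2) = -(1/2) by norm_num, Real.rpow_neg (by linarith), ← Real.sqrt_eq_rpow]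
  have e3 : Real.sqrt (1 - vfun D q z) = |Qell q z| / Real.sqrt (Complex.normSq (Qval q z)) := by
    rw [one_sub_vfun hD hq hz, Real.sqrt_div (sq_nonneg _), Real.sqrt_sq_eq_abs]
  have e4 : Real.sqrt (vfun D q z) = Real.sqrt D * z.im / Real.sqrt (Complex.normSq (Qval q z)) := by
    unfold vfun
    rw [Real.sqrt_div (by positivity), Real.sqrt_mul hD'.le, Real.sqrt_sq hz.le]
  rw [e1, e2, e3, e4]
  have h5 : 0 < Real.sqrt D := Real.sqrt_pos.2 hD'
  have h6 := abs_pos.2 hs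
  have h7 := Real.sqrt_pos.2 hn
  have h8 := Real.sq_sqrt hn.le
  field_simp
  rw [h8]

lemma Phi_hasW (k : ℕ) (hk : 2 ≤ k) {D : ℤ} (hD : 0 < D) {q : ℤ × ℤ × ℤ} (hq : q ∈ QD D) {z : ℂ} (hz : 0 < z.im)
    (hs : Qell q z ≠ 0) :
    HasW (fun z => ((Real.sign (Qell q z) * psi k (vfun D q z) : ℝ) : ℂ))
      (-(Complex.I/2) * (Real.sqrt D : ℂ) * (vfun D q z : ℂ)^(k-1) * (Qval q z)⁻¹)
      ((Complex.I/2) * (Real.sqrt D : ℂ) * (vfun D q z : ℂ)^(k-1) * (starRingEnd ℂ) (Qval q z)⁻¹) z := by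
  have hv := vfun_pos hD hq hz
  have hv1 := vfun_lt hD hq hz hs
  have hne := Qval_ne hD hq hz
  have hD' : (0:ℝ) < D := by exact_mod_cast hD
  have h5 : 0 < Real.sqrt D := Real.sqrt_pos.2 hD'
  have h1 := (psi_hasDerivAt k hk hv hv1).const_mul (Real.sign (Qell q z))
  have h2 := (vfun_hasW hD hq hz).real_comp (v := vfun D q) h1
  have hU : IsOpen {w : ℂ | 0 < Qell q z * Qell q w} :=
    isOpen_lt continuous_const (continuous_const.mul (Qell_cont q))
  have hsg : (Real.sign (Qell q z)) * (1/2 * ((vfun D q z) ^ ((k : ℝ) - 3 / 2) * (1 - vfun D q z) ^ (-(1:ℝ) / 2)))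
      = 1/2 * (vfun D q z)^(k-1) * (Complex.normSq (Qval q z) / (Real.sqrt D * z.im * Qell q z)) := by
    rw [psi_der_eq k hk hD hq hz hs]
    rcases lt_or_gt_of_ne hs with h | h
    · rw [Real.sign_of_neg h, abs_of_neg h]; field_simp
    · rw [Real.sign_of_pos h, abs_of_pos h]; field_simp
  rw [hsg] at h2
  have hne' : (starRingEnd ℂ) (Qval q z) ≠ 0 := by simpa using hne
  have hdd : (Real.sqrt D : ℂ)^2 = (D : ℂ) := by
    rw [← Complex.ofReal_pow, Real.sq_sqrt hD'.le]; simp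
  have hd0 : (Real.sqrt D : ℂ) ≠ 0 := by exact_mod_cast h5.ne'
  have hy0 : (z.im : ℂ) ≠ 0 := by exact_mod_cast hz.ne'
  have hs0 : (Qell q z : ℂ) ≠ 0 := by exact_mod_cast hs
  refine (h2.congr_val ?_ ?_).congr_fun hU (mul_self_pos.2 hs) ?_
  · push_cast
    rw [Complex.normSq_eq_conj_mul_self, ← hdd]
    simp only [map_inv₀]
    field_simp
  · push_cast
    rw [Complex.normSq_eq_conj_mul_self, ← hdd]
    simp only [map_inv₀]
    field_simp
  · intro w hw
    have hw : 0 < Qell q z * Qell q w := hw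
    congr 2
    rcases lt_or_gt_of_ne hs with h | h
    · rw [Real.sign_of_neg h, Real.sign_of_neg (by nlinarith)]
    · rw [Real.sign_of_pos h, Real.sign_of_pos (by nlinarith)]

lemma Fsummand_eq (k : ℕ) (D : ℤ) (q : ℤ × ℤ × ℤ) (z : ℂ) :
    Fsummand k D z q = Qval q z ^ (k-1) * ((Real.sign (Qell q z) * psi k (vfun D q z) : ℝ) : ℂ) := by
  unfold Fsummand vfun
  push_cast; ring

lemma Fs_hasW (k : ℕ) (hk : 2 ≤ k) {D : ℤ} (hD : 0 < D) {q : ℤ × ℤ × ℤ} (hq : q ∈ QD D) {z : ℂ} (hz : 0 < z.im)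
    (hs : Qell q z ≠ 0) :
    ∃ A, HasW (fun z => Fsummand k D z q) A
      ((Complex.I/2 * (Real.sqrt D : ℂ) * (D:ℂ)^(k-1)) * ((z.im : ℂ)^(2*(k-1)) * (starRingEnd ℂ) ((Qval q z)⁻¹^k))) z := by
  have h1 := (HasW.hol (Qval_hasDerivAt q z)).pow (k-1)
  have h2 := h1.mul (Phi_hasW k hk hD hq hz hs)
  refine ⟨_, (h2.congr_val rfl ?_).congr_fun isOpen_univ (Set.mem_univ z) (fun w _ => Fsummand_eq k D q w)⟩
  have hne := Qval_ne hD hq hz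
  have hne' : (starRingEnd ℂ) (Qval q z) ≠ 0 := by simpa using hne
  rw [vfun_eq]
  obtain ⟨m, rfl⟩ : ∃ m, k = m + 1 := ⟨k-1, by omega⟩
  simp only [Nat.add_sub_cancel, map_mul, map_pow, map_inv₀, mul_pow, mul_zero, zero_mul, zero_add, pow_succ, ← pow_mul]
  have : Qval q z ^ m * (Qval q z)⁻¹ ^ m = 1 := by rw [← mul_pow, mul_inv_cancel₀ hne, one_pow]
  linear_combination (Complex.I/2 * (Real.sqrt D : ℂ) * (D:ℂ)^m * (z.im : ℂ)^(2*m) * ((starRingEnd ℂ) (Qval q z))⁻¹^m *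
    ((starRingEnd ℂ) (Qval q z))⁻¹) * this

lemma Fs_bound (k : ℕ) (hk : 2 ≤ k) {D : ℤ} (hD : 0 < D) {q : ℤ × ℤ × ℤ} (hq : q ∈ QD D) {z : ℂ} (hz : 0 < z.im)
    (hs : Qell q z ≠ 0) :
    ‖Fsummand k D z q‖ ≤ (Real.sqrt D * z.im)^(2*k-1) * ‖(Qval q z)⁻¹‖^k := by
  have hv := vfun_pos hD hq hz
  have hv1 := vfun_lt hD hq hz hs
  have hne := Qval_ne hD hq hz
  have hD' : (0:ℝ) < D := by exact_mod_cast hD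
  rw [Fsummand_eq, norm_mul, norm_pow, Complex.norm_real, norm_mul, Real.norm_eq_abs, Real.norm_eq_abs]
  have h1 : |Real.sign (Qell q z)| = 1 := by
    rcases lt_or_gt_of_ne hs with h | h
    · rw [Real.sign_of_neg h]; simp
    · rw [Real.sign_of_pos h]; simp
  have h2 := psi_bound k hk hv hv1
  have hQ : 0 < ‖Qval q z‖ := norm_pos_iff.2 hne
  have h3 : vfun D q z = (Real.sqrt D * z.im * ‖Qval q z‖⁻¹)^2 := by
    unfold vfun
    rw [Complex.normSq_eq_norm_sq, mul_pow, mul_pow, Real.sq_sqrt hD'.le, inv_pow, div_eq_mul_inv]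
  have h4 : 0 < Real.sqrt D * z.im * ‖Qval q z‖⁻¹ := by
    have := Real.sqrt_pos.2 hD'
    positivity
  have h5 : vfun D q z ^ ((k : ℝ) - 3 / 2) * vfun D q z = (Real.sqrt D * z.im * ‖Qval q z‖⁻¹)^(2*k-1) := by
    rw [← Real.rpow_add_one hv.ne', h3, ← Real.rpow_natCast, ← Real.rpow_natCast, ← Real.rpow_mul h4.le]
    congr 1
    push_cast [Nat.cast_sub (show 1 ≤ 2*k by omega)]
    ring
  rw [h5] at h2
  rw [h1, one_mul, norm_inv]
  calc ‖Qval q z‖^(k-1) * |psi k (vfun D q z)| ≤ ‖Qval q z‖^(k-1) * (Real.sqrt D * z.im * ‖Qval q z‖⁻¹)^(2*k-1) := by gcongr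
    _ = (Real.sqrt D * z.im)^(2*k-1) * (‖Qval q z‖ * ‖Qval q z‖⁻¹)^(k-1) * ‖Qval q z‖⁻¹^k := by
      rw [mul_pow _ (‖Qval q z‖⁻¹), mul_pow ‖Qval q z‖, show 2*k-1 = (k-1)+k by omega, pow_add ‖Qval q z‖⁻¹]
      ring
    _ = _ := by rw [mul_inv_cancel₀ hQ.ne', one_pow, mul_one]

open Metric

lemma E_expand (E v : ℂ) (hE : E ≠ 0) (h : (E - 1)^2 = -4 * v * E) (m : ℕ) :
    ∑ j ∈ Finset.range (2*m+1), ((-1/4)^m * ((Nat.choose (2*m) j : ℂ) * (-1)^j)) * (E^j * (E^m)⁻¹) = v^m := by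
  have h1 : (E - 1)^(2*m) = (-4)^m * v^m * E^m := by
    rw [pow_mul, h, mul_pow, mul_pow]
  have h2 : (E - 1)^(2*m) = ∑ j ∈ Finset.range (2*m+1), (Nat.choose (2*m) j : ℂ) * (-1)^j * E^j := by
    rw [sub_eq_add_neg, add_pow]
    apply Finset.sum_congr rfl
    intro j hj
    have hj' : j ≤ 2*m := by simpa [Nat.lt_succ_iff] using hj
    have : (-1:ℂ)^(2*m-j) = (-1)^j := by
      have e : (-1:ℂ)^(2*m-j) * (-1)^j = 1 := by
        rw [← pow_add, Nat.sub_add_cancel hj', pow_mul]; simp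
      have e2 : ((-1:ℂ)^j) * (-1)^j = 1 := by rw [← mul_pow]; simp
      calc (-1:ℂ)^(2*m-j) = (-1:ℂ)^(2*m-j) * (((-1:ℂ)^j) * (-1)^j) := by rw [e2, mul_one]
        _ = _ := by rw [← mul_assoc, e, one_mul]
    rw [this]; ring
  have hEm : E^m ≠ 0 := pow_ne_zero _ hE
  have h3 : v^m = (-1/4)^m * (E-1)^(2*m) * (E^m)⁻¹ := by
    rw [h1, show (-1/4:ℂ)^m * ((-4)^m * v^m * E^m) * (E^m)⁻¹ = ((-1/4:ℂ)^m * (-4)^m) * v^m * (E^m * (E^m)⁻¹) by ring,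
      mul_inv_cancel₀ hEm, ← mul_pow]
    norm_num
  rw [h3, h2, Finset.mul_sum, Finset.sum_mul]
  apply Finset.sum_congr rfl
  intro j _; ring

lemma const_of_HasW {c : ℂ} {r : ℝ} {G : ℂ → ℂ} (h : ∀ z ∈ ball c r, HasW G 0 0 z) :
    ∀ z ∈ ball c r, G z = G c := by
  intro z hz
  have hr : 0 < r := pos_of_mem_ball hz
  have hw : wlin 0 0 = 0 := by ext1; simp [wlin_apply]
  refine IsOpen.is_const_of_fderiv_eq_zero (𝕜 := ℝ) isOpen_ball (convex_ball c r).isPreconnected ?_ ?_ hz (mem_ball_self hr)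
  · intro w hw
    exact (show HasFDerivAt G _ w from h w hw).differentiableAt.differentiableWithinAt
  · intro w hw'
    rw [(show HasFDerivAt G _ w from h w hw').fderiv, hw]; rfl

lemma HasW.sum {ι : Type*} (s : Finset ι) {G : ι → ℂ → ℂ} {A B : ι → ℂ} {z : ℂ} (h : ∀ i ∈ s, HasW (G i) (A i) (B i) z) :
    HasW (fun z => ∑ i ∈ s, G i z) (∑ i ∈ s, A i) (∑ i ∈ s, B i) z := by
  classical
  induction s using Finset.induction_on with
  | empty => simpa using HasW.const 0 z
  | insert i s hi ih =>
    simp only [Finset.sum_insert hi]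
    exact (h i (by simp)).add (ih (fun j hj => h j (by simp [hj])))

section perq
variable {D : ℤ} {q : ℤ × ℤ × ℤ} {α β : ℝ}

noncomputable def zet (α β : ℝ) (z : ℂ) : ℂ := (z - α) / (z - β)

lemma sub_real_ne {z : ℂ} (hz : 0 < z.im) (α : ℝ) : z - α ≠ 0 := by
  intro h
  have := congrArg Complex.im h
  simp at this
  linarith

lemma zet_ne {z : ℂ} (hz : 0 < z.im) (α β : ℝ) : zet α β z ≠ 0 :=
  div_ne_zero (sub_real_ne hz α) (sub_real_ne hz β)

lemma zet_deriv {z : ℂ} (hz : 0 < z.im) (hQ : ∀ z, Qval q z = q.1 * ((z - α) * (z - β)))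
    (ha : (q.1 : ℂ) ≠ 0) (n : ℤ) :
    HasDerivAt (fun z => zet α β z ^ n) (n * zet α β z ^ n * ((q.1 * (α - β)) * (Qval q z)⁻¹)) z := by
  have h1 := sub_real_ne hz α
  have h2 := sub_real_ne hz β
  have h3 : HasDerivAt (zet α β) (zet α β z * ((q.1 * (α - β)) * (Qval q z)⁻¹)) z := by
    have := ((hasDerivAt_id z).sub_const (α:ℂ)).div ((hasDerivAt_id z).sub_const (β:ℂ)) h2
    refine hasDerivAt_cg this (fun w => by simp [zet]) ?_
    rw [hQ, zet]
    simp only [id]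
    field_simp
    ring
  have h4 := (hasDerivAt_zpow n (zet α β z) (Or.inl (zet_ne hz α β))).comp z h3
  refine hasDerivAt_cg h4 (fun w => rfl) ?_
  rw [zpow_sub_one₀ (zet_ne hz α β)]
  have := zet_ne hz α β
  field_simp

lemma zet_E {z : ℂ} (hz : 0 < z.im) (hQ : ∀ z, Qval q z = q.1 * ((z - α) * (z - β)))
    (ha : (q.1 : ℂ) ≠ 0) (hab : ((q.1 : ℂ) * (α - β))^2 = D) :
    (zet α β z * ((starRingEnd ℂ) (zet α β z))⁻¹ - 1)^2 =
      -4 * (vfun D q z : ℂ) * (zet α β z * ((starRingEnd ℂ) (zet α β z))⁻¹) := by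
  have h1 := sub_real_ne hz α
  have h2 := sub_real_ne hz β
  have h1' : (starRingEnd ℂ) z - α ≠ 0 := by
    intro h; apply h1; have := congrArg (starRingEnd ℂ) h; simpa using this
  have h2' : (starRingEnd ℂ) z - β ≠ 0 := by
    intro h; apply h2; have := congrArg (starRingEnd ℂ) h; simpa using this
  rw [vfun_eq, hQ, ← hab]
  have him : (z.im : ℂ) = (z - (starRingEnd ℂ) z)/(2 * Complex.I) := by
    rw [Complex.sub_conj]; field_simp; push_cast; ring
  have him2 : (z.im : ℂ)^2 = -(z - (starRingEnd ℂ) z)^2/4 := by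
    rw [him, div_pow, mul_pow, Complex.I_sq]; ring
  rw [him2]
  simp only [zet, map_div₀, map_sub, Complex.conj_ofReal, map_inv₀, map_mul, map_intCast]
  field_simp
  ring

noncomputable def ecoef (m j : ℕ) : ℂ := (-Complex.I/2) * ((-1/4)^m * ((Nat.choose (2*m) j : ℂ) * (-1)^j))

lemma Fs_WC (k : ℕ) (hk : 2 ≤ k) (hD : 0 < D) (hq : q ∈ QD D) {c : ℂ} {r : ℝ}
    (him : ∀ z ∈ ball c r, 0 < z.im) (hs : ∀ z ∈ ball c r, Qell q z ≠ 0)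
    (hQ : ∀ z, Qval q z = q.1 * ((z - α) * (z - β)))
    (ha : (q.1 : ℂ) ≠ 0) (hab : (q.1 : ℂ) * (α - β) = (Real.sqrt D : ℂ)) (hab2 : ((q.1 : ℂ) * (α - β))^2 = D) :
    WC (ball c r) (2*(k-1)+1) (fun z => Fsummand k D z q)
      (fun z => ((Real.sqrt D : ℂ) * ecoef (k-1) (k-1)) * ((-(D:ℂ))^(k-1) * (Nat.factorial (k-1) : ℂ)^2 * ((Qval q z)⁻¹)^k)) := by
  obtain ⟨m, rfl⟩ : ∃ m, k = m + 1 := ⟨k-1, by omega⟩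
  simp only [Nat.add_sub_cancel]
  have hQne : ∀ z ∈ ball c r, Qval q z ≠ 0 := fun z hz => Qval_ne hD hq (him z hz)
  have hQd : Differentiable ℂ (Qval q) := fun z => (Qval_hasDerivAt q z).differentiableAt
  have hgd : DifferentiableOn ℂ (fun z => (Qval q z)⁻¹) (ball c r) := hQd.differentiableOn.inv hQne
  set L := prim c (fun z => (Qval q z)⁻¹) with hLdef
  have hL : ∀ z ∈ ball c r, HasDerivAt L (Qval q z)⁻¹ z := prim_hasDerivAt hgd
  have hLd : DifferentiableOn ℂ L (ball c r) := prim_diff hgd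
  set cc : ℕ → ℂ := fun j => ecoef m j / ((j:ℂ) - m) with hcc
  set d : ℂ := (Real.sqrt D : ℂ) with hd
  -- the difference is constant
  set R : ℂ → ℂ := fun z => (d * ecoef m m) * (L z - (starRingEnd ℂ) (L z)) +
    ∑ j ∈ Finset.range (2*m+1), cc j * (zet α β z ^ ((j:ℤ) - m) * (starRingEnd ℂ) (zet α β z ^ ((m:ℤ) - j))) with hR
  have key : ∀ z ∈ ball c r, ∑ j ∈ Finset.range (2*m+1), ecoef m j *
      (zet α β z ^ ((j:ℤ) - m) * (starRingEnd ℂ) (zet α β z ^ ((m:ℤ) - j))) = -(Complex.I/2) * (vfun D q z : ℂ)^m := by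
    intro z hz
    have hz0 := zet_ne (him z hz) α β
    have hz0' : (starRingEnd ℂ) (zet α β z) ≠ 0 := by simpa using hz0
    rw [← E_expand _ _ (mul_ne_zero hz0 (inv_ne_zero hz0')) (zet_E (him z hz) hQ ha hab2) m, Finset.mul_sum]
    apply Finset.sum_congr rfl
    intro j _
    rw [map_zpow₀, zpow_sub₀ hz0, zpow_sub₀ hz0', zpow_natCast, zpow_natCast, zpow_natCast, zpow_natCast, ecoef]
    simp only [mul_pow, mul_inv, inv_pow, inv_inv, div_eq_mul_inv]
    ring
  have hterm : ∀ z ∈ ball c r, ∀ j, j ∈ Finset.range (2*m+1) →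
      HasW (fun z => cc j * (zet α β z ^ ((j:ℤ) - m) * (starRingEnd ℂ) (zet α β z ^ ((m:ℤ) - j))))
      ((if j = m then 0 else ecoef m j * (zet α β z ^ ((j:ℤ) - m) * (starRingEnd ℂ) (zet α β z ^ ((m:ℤ) - j)))) * (d * (Qval q z)⁻¹))
      ((if j = m then 0 else ecoef m j * (zet α β z ^ ((j:ℤ) - m) * (starRingEnd ℂ) (zet α β z ^ ((m:ℤ) - j)))) *
        (-(d * (starRingEnd ℂ) (Qval q z)⁻¹))) z := by
    intro z hz j _
    have h1 := HasW.hol (zet_deriv (him z hz) hQ ha ((j:ℤ) - m))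
    have h2 := (HasW.hol (zet_deriv (him z hz) hQ ha ((m:ℤ) - j))).conj
    have h3 := (h1.mul h2).const_mul (cc j)
    rw [hab] at h3
    refine h3.congr_val ?_ ?_
    · split_ifs with hjm
      · simp [hcc, hjm]
      · have : (j:ℂ) - m ≠ 0 := sub_ne_zero.2 (by exact_mod_cast hjm)
        simp only [hcc, map_zero, mul_zero, add_zero]
        push_cast
        field_simp
    · split_ifs with hjm
      · simp [hcc, hjm]
      · have : (j:ℂ) - m ≠ 0 := sub_ne_zero.2 (by exact_mod_cast hjm)
        simp only [hcc, zero_mul, zero_add, map_mul, map_intCast, hd, Complex.conj_ofReal]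
        push_cast
        rw [show (m:ℂ) - j = -(j - m) by ring]
        field_simp
  have hmm : m ∈ Finset.range (2*m+1) := by simp; omega
  have hsumif : ∀ z ∈ ball c r, ∑ j ∈ Finset.range (2*m+1), (if j = m then 0 else ecoef m j *
      (zet α β z ^ ((j:ℤ) - m) * (starRingEnd ℂ) (zet α β z ^ ((m:ℤ) - j)))) = -(Complex.I/2) * (vfun D q z : ℂ)^m - ecoef m m := by
    intro z hz
    rw [← key z hz, ← Finset.add_sum_erase _ _ hmm, ← Finset.add_sum_erase (a := m) _ _ hmm]
    simp only [if_true, sub_self, zpow_zero, map_one, mul_one]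
    rw [zero_add, add_sub_cancel_left]
    apply Finset.sum_congr rfl
    intro j hj
    rw [if_neg (Finset.ne_of_mem_erase hj)]
  have hRW : ∀ z ∈ ball c r, HasW R (-(Complex.I/2) * d * (vfun D q z : ℂ)^m * (Qval q z)⁻¹)
      ((Complex.I/2) * d * (vfun D q z : ℂ)^m * (starRingEnd ℂ) (Qval q z)⁻¹) z := by
    intro z hz
    have h1 := HasW.hol (hL z hz)
    have h2 := ((h1.sub h1.conj).const_mul (d * ecoef m m)).add (HasW.sum _ (hterm z hz))
    refine h2.congr_val ?_ ?_
    · rw [← Finset.sum_mul, hsumif z hz, map_zero]; ring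
    · rw [← Finset.sum_mul, hsumif z hz]; ring
  have hconst := const_of_HasW (c := c) (r := r) (G := fun z => ((Real.sign (Qell q z) * psi (m+1) (vfun D q z) : ℝ) : ℂ) - R z)
    (fun z hz => ((Phi_hasW (m+1) hk hD hq (him z hz) (hs z hz)).sub (hRW z hz)).congr_val (by simp [hd]) (by simp [hd]))
  set K0 : ℂ := ((Real.sign (Qell q c) * psi (m+1) (vfun D q c) : ℝ) : ℂ) - R c with hK0
  have hpow : ∀ z ∈ ball c r, ∀ j ∈ Finset.range (2*m+1), Qval q z ^ m * zet α β z ^ ((j:ℤ) - m) =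
      (q.1:ℂ)^m * ((z - α)^j * (z - β)^(2*m-j)) := by
    intro z hz j hj
    have h1 := sub_real_ne (him z hz) α
    have h2 := sub_real_ne (him z hz) β
    have hj' : j ≤ 2*m := by simpa [Nat.lt_succ_iff] using hj
    rw [hQ, zpow_sub₀ (zet_ne (him z hz) α β), zpow_natCast, zpow_natCast, zet, div_pow, div_pow, mul_pow, mul_pow]
    have : (z - β)^(2*m-j) * (z-β)^j = (z - β)^m * (z - β)^m := by
      rw [← pow_add, ← pow_add]; congr 1; omega
    field_simp
    rw [← sq] at this
    linear_combination -this
  have wpoly : ∀ (e : ℂ) (j : ℕ), j ∈ Finset.range (2*m+1) → WC (ball c r) (2*m+1)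
      (fun z => e * ((z - α)^j * (z - β)^(2*m-j))) (fun _ => 0) := by
    intro e j hj
    have hj' : j ≤ 2*m := by simpa [Nat.lt_succ_iff] using hj
    have := WC.hol (U := ball c r) isOpen_ball (2*m+1) (f := fun z => e * ((z - α)^j * (z - β)^(2*m-j))) (by fun_prop)
    rw [lin_iter_deriv _ _ _ _ _ hj'] at this
    exact this
  have wlog : WC (ball c r) (2*m+1) (fun z => Qval q z ^ m * L z)
      (fun z => (-(D:ℂ))^m * (Nat.factorial m : ℂ)^2 * ((Qval q z)⁻¹)^(m+1)) := by
    refine WC.congr_right _ (WC.hol isOpen_ball (2*m+1) ((hQd.pow m).differentiableOn.mul hLd)) ?_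
    intro z hz
    have := bol_log isOpen_ball (q.1:ℂ) (q.2.1:ℂ) (q.2.2:ℂ) hQne hL m z hz
    have hDq : ((q.2.1:ℂ))^2 - 4 * q.1 * q.2.2 = D := by exact_mod_cast hq
    rw [hDq] at this
    exact this
  have wQ : ∀ e : ℂ, WC (ball c r) (2*m+1) (fun z => e * Qval q z ^ m) (fun _ => 0) := by
    intro e
    refine WC.congr_left isOpen_ball _ (wpoly (e * (q.1:ℂ)^m) m hmm) ?_
    intro z hz
    have := hpow z hz m hmm
    simp only [sub_self, zpow_zero, mul_one] at this
    rw [this]; ring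
  have wsum : WC (ball c r) (2*m+1) (fun z => ∑ j ∈ Finset.range (2*m+1), (cc j * (q.1:ℂ)^m) * ((z - α)^j * (z - β)^(2*m-j)) *
      (starRingEnd ℂ) (zet α β z ^ ((m:ℤ) - j))) (fun z => 0) := by
    refine WC.congr_right _ (WC.sum _ _ _ (fun (j:ℕ) z => 0 * (starRingEnd ℂ) (zet α β z ^ ((m:ℤ) - j))) (fun j hj => ?_)) ?_
    · refine WC.mul_conj isOpen_ball ?_ _ (wpoly (cc j * (q.1:ℂ)^m) j hj)
      intro z hz
      exact (zet_deriv (him z hz) hQ ha ((m:ℤ) - j)).differentiableAt.differentiableWithinAt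
    · intro z _; simp
  have wtot := ((wQ K0).add _ (wlog.const_mul (d * ecoef m m))).add _
    ((WC.mul_conj isOpen_ball hLd _ (wQ (-(d * ecoef m m)))).add _ wsum)
  refine WC.congr_right _ (WC.congr_left isOpen_ball _ wtot ?_) ?_
  · intro z hz
    rw [Fsummand_eq]
    have h1 := hconst z hz
    simp only [Nat.add_sub_cancel] at h1 ⊢
    have h2 : ((Real.sign (Qell q z) * psi (m+1) (vfun D q z) : ℝ) : ℂ) = K0 + R z := by
      rw [hK0]; linear_combination h1
    rw [h2]
    have h3 : Qval q z ^ m * ∑ j ∈ Finset.range (2*m+1), cc j * (zet α β z ^ ((j:ℤ) - m) * (starRingEnd ℂ) (zet α β z ^ ((m:ℤ) - j)))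
        = ∑ j ∈ Finset.range (2*m+1), (cc j * (q.1:ℂ)^m) * ((z - α)^j * (z - β)^(2*m-j)) *
      (starRingEnd ℂ) (zet α β z ^ ((m:ℤ) - j)) := by
      rw [Finset.mul_sum]
      apply Finset.sum_congr rfl
      intro j hj
      linear_combination cc j * (starRingEnd ℂ) (zet α β z ^ ((m:ℤ) - j)) * hpow z hz j hj
    rw [← h3, hR]
    ring
  · intro z hz
    ring

end perq

open Metric

lemma q1_ne {D : ℤ} (hDsq : ¬∃ m : ℤ, m ^ 2 = D) {q : ℤ × ℤ × ℤ} (hq : q ∈ QD D) : q.1 ≠ 0 := by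
  intro h
  apply hDsq
  refine ⟨q.2.1, ?_⟩
  have : q.2.1 ^ 2 - 4 * q.1 * q.2.2 = D := hq
  rw [← this, h]; ring

lemma Fs_WC2 (k : ℕ) (hk : 2 ≤ k) {D : ℤ} (hD : 0 < D) (hDsq : ¬∃ m : ℤ, m ^ 2 = D) {q : ℤ × ℤ × ℤ} (hq : q ∈ QD D)
    {c : ℂ} {r : ℝ} (him : ∀ z ∈ ball c r, 0 < z.im) (hs : ∀ z ∈ ball c r, Qell q z ≠ 0) :
    WC (ball c r) (2*(k-1)+1) (fun z => Fsummand k D z q)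
      (fun z => ((Real.sqrt D : ℂ) * ecoef (k-1) (k-1)) * ((-(D:ℂ))^(k-1) * (Nat.factorial (k-1) : ℂ)^2 * ((Qval q z)⁻¹)^k)) := by
  have hD' : (0:ℝ) < D := by exact_mod_cast hD
  have ha : (q.1:ℂ) ≠ 0 := by exact_mod_cast q1_ne hDsq hq
  have hdd : (Real.sqrt D : ℂ)^2 = (D : ℂ) := by
    rw [← Complex.ofReal_pow, Real.sq_sqrt hD'.le]; simp
  have hDq : ((q.2.1:ℂ))^2 - 4 * q.1 * q.2.2 = D := by exact_mod_cast hq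
  have hab : (q.1 : ℂ) * (((((-(q.2.1:ℝ) + Real.sqrt D)/(2*q.1) : ℝ)) : ℂ) - ((((-(q.2.1:ℝ) - Real.sqrt D)/(2*q.1) : ℝ)) : ℂ)) = (Real.sqrt D : ℂ) := by
    push_cast
    field_simp
    ring
  refine Fs_WC (α := (-(q.2.1:ℝ) + Real.sqrt D)/(2*q.1)) (β := (-(q.2.1:ℝ) - Real.sqrt D)/(2*q.1)) k hk hD hq him hs ?_ ha hab ?_
  · intro z
    push_cast
    unfold Qval
    have : (q.2.2:ℂ) = (q.2.1^2 - (Real.sqrt D : ℂ)^2)/(4*q.1) := by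
      rw [hdd, ← hDq]; field_simp; ring
    rw [this]
    field_simp
    ring
  · rw [hab, hdd]

lemma Qval_lower {D : ℤ} (hD : 0 < D) {τ : ℂ} (hτ : 0 < τ.im) :
    ∃ c0 : ℝ, 0 < c0 ∧ ∀ q ∈ QD D, ∀ z ∈ ball τ (τ.im/2), c0 * (1 + |(q.2.1:ℝ)|) ≤ ‖Qval q z‖ := by
  set y1 := τ.im/2 with hy1
  have hy1p : 0 < y1 := by positivity
  set X := ‖τ‖ + y1 with hX
  have hXp : 0 < X := by positivity
  set C := 2/y1 + 2*X/y1^2 with hC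
  have hCp : 0 < C := by positivity
  refine ⟨C⁻¹, by positivity, ?_⟩
  intro q hq z hz
  have hzn : ‖z - τ‖ < y1 := by simpa [dist_eq_norm] using hz
  have hyz : y1 ≤ z.im := by
    have h := (Complex.abs_im_le_norm (z - τ)).trans_lt hzn
    rw [Complex.sub_im] at h
    have := (abs_lt.1 h).1
    linarith
  have hxz : |z.re| ≤ X := by
    refine (Complex.abs_re_le_norm z).trans ?_
    calc ‖z‖ = ‖τ + (z - τ)‖ := by congr 1; ring
      _ ≤ ‖τ‖ + ‖z - τ‖ := norm_add_le _ _
      _ ≤ X := by linarith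
  have hD1 : (1:ℝ) ≤ D := by exact_mod_cast hD
  set N := ‖Qval q z‖ with hN
  have hN0 : 0 ≤ N := norm_nonneg _
  have hN2 : N^2 = (Qell q z)^2 + D * z.im^2 := by
    rw [hN, ← Complex.normSq_eq_norm_sq, normSq_Qval hq]
  have hsN : |Qell q z| ≤ N := by
    apply abs_le_of_sq_le_sq _ hN0
    nlinarith [sq_nonneg z.im]
  have hyN : y1 ≤ N := by
    apply le_of_sq_le_sq _ hN0
    nlinarith [sq_nonneg (Qell q z)]
  have hre : (Qval q z).re = Qell q z - 2 * q.1 * z.im^2 := by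
    simp [Qval, Qell, Complex.normSq_apply, pow_two]; ring
  have him : (Qval q z).im = z.im * (2 * q.1 * z.re + q.2.1) := by
    simp [Qval, pow_two]; ring
  have h1 : |(Qval q z).re| ≤ N := Complex.abs_re_le_norm _
  have h2 : |(Qval q z).im| ≤ N := Complex.abs_im_le_norm _
  have ha : |(q.1:ℝ)| * y1^2 ≤ N := by
    have e : 2 * (|(q.1:ℝ)| * z.im^2) ≤ 2 * N := by
      calc 2 * (|(q.1:ℝ)| * z.im^2) = |Qell q z - (Qval q z).re| := by
            rw [hre, show Qell q z - (Qell q z - 2 * q.1 * z.im^2) = 2 * q.1 * z.im^2 by ring, abs_mul, abs_mul]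
            simp; ring
        _ ≤ |Qell q z| + |(Qval q z).re| := abs_sub _ _
        _ ≤ 2 * N := by linarith
    have : y1^2 ≤ z.im^2 := by gcongr
    have := mul_le_mul_of_nonneg_left this (abs_nonneg (q.1:ℝ))
    linarith
  have hb0 : |2 * q.1 * z.re + q.2.1| * y1 ≤ N := by
    rw [him, abs_mul, abs_of_pos (by linarith : 0 < z.im)] at h2
    have := mul_le_mul_of_nonneg_right hyz (abs_nonneg (2 * q.1 * z.re + q.2.1))
    linarith
  have ha' : |(q.1:ℝ)| ≤ N / y1^2 := by rw [le_div_iff₀ (by positivity)]; exact ha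
  have hb0' : |2 * q.1 * z.re + q.2.1| ≤ N / y1 := by rw [le_div_iff₀ (by positivity)]; exact hb0
  have h1' : 1 ≤ N / y1 := by rw [le_div_iff₀ hy1p]; linarith
  have hb : |(q.2.1:ℝ)| ≤ N / y1 + 2 * (N/y1^2) * X := by
    calc |(q.2.1:ℝ)| = |(2 * q.1 * z.re + q.2.1) - 2 * q.1 * z.re| := by congr 1; ring
      _ ≤ |2 * q.1 * z.re + q.2.1| + |2 * q.1 * z.re| := abs_sub _ _
      _ ≤ N / y1 + 2 * (N/y1^2) * X := by
        apply add_le_add hb0'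
        rw [abs_mul, abs_mul]
        simp only [Nat.abs_ofNat]
        gcongr
  rw [inv_mul_le_iff₀ hCp]
  have : C * N = N/y1 + (N/y1 + 2 * (N/y1^2) * X) := by rw [hC]; ring
  linarith

lemma good_nhd {D : ℤ} (hD : 0 < D) (hDsq : ¬∃ m : ℤ, m ^ 2 = D) {τ : ℂ} (hτ : 0 < τ.im)
    (hτE : ∀ q ∈ QD D, Qell q τ ≠ 0) :
    ∃ r > 0, r ≤ τ.im/2 ∧ ∀ q ∈ QD D, ∀ z ∈ ball τ r, Qell q z ≠ 0 := by
  obtain ⟨c0, hc0, hlow⟩ := Qval_lower hD hτ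
  have hD' : (0:ℝ) < D := by exact_mod_cast hD
  have h1 := (summable_b D hD hDsq).tendsto_cofinite_zero
  have h2 : ∀ᶠ q : QD D in Filter.cofinite, (1 + |((q : ℤ × ℤ × ℤ).2.1 : ℝ)|)^(-(2:ℝ)) < c0^2/(D * (2*τ.im)^2) :=
    h1.eventually (gt_mem_nhds (by positivity))
  rw [Filter.eventually_cofinite] at h2
  have h3 : ∀ᶠ z in nhds τ, ∀ q ∈ {q : QD D | ¬ (1 + |((q : ℤ × ℤ × ℤ).2.1 : ℝ)|)^(-(2:ℝ)) < c0^2/(D * (2*τ.im)^2)},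
      Qell (q : ℤ × ℤ × ℤ) z ≠ 0 := by
    rw [Filter.eventually_all_finite h2]
    intro q _
    exact (Qell_cont _).continuousAt.eventually_ne (hτE q q.2)
  obtain ⟨r, hr, hr2⟩ := Metric.eventually_nhds_iff_ball.1 h3
  refine ⟨min r (τ.im/2), lt_min hr (by positivity), min_le_right _ _, ?_⟩
  intro q hq z hz
  have hz1 : z ∈ ball τ r := ball_subset_ball (min_le_left _ _) hz
  have hz2 : z ∈ ball τ (τ.im/2) := ball_subset_ball (min_le_right _ _) hz
  by_cases hc : (1 + |((q : ℤ × ℤ × ℤ).2.1 : ℝ)|)^(-(2:ℝ)) < c0^2/(D * (2*τ.im)^2)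
  · intro h0
    have hl := hlow q hq z hz2
    have hN2 := normSq_Qval hq z
    rw [h0, Complex.normSq_eq_norm_sq] at hN2
    have hzn : ‖z - τ‖ < τ.im/2 := by simpa [dist_eq_norm] using hz2
    have h := (Complex.abs_im_le_norm (z - τ)).trans_lt hzn
    rw [Complex.sub_im, abs_lt] at h
    have hb : 0 < 1 + |((q : ℤ × ℤ × ℤ).2.1 : ℝ)| := by positivity
    have hy : D * z.im^2 ≤ D * (2*τ.im)^2 := by
      have : 0 < z.im := by linarith
      gcongr; linarith
    have hl2 : (c0 * (1 + |((q : ℤ × ℤ × ℤ).2.1 : ℝ)|))^2 ≤ ‖Qval q z‖^2 := by gcongr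
    rw [Real.rpow_neg hb.le, show (2:ℝ) = ((2:ℕ):ℝ) by norm_num, Real.rpow_natCast, lt_div_iff₀ (by positivity),
      inv_mul_lt_iff₀ (by positivity)] at hc
    push_cast at hc
    nlinarith
  · exact hr2 z hz1 ⟨q, hq⟩ hc

open Metric

lemma Dpow_eq (k : ℕ) (hk : 2 ≤ k) {D : ℤ} (hD : 0 < D) :
    Dpow D ((k:ℝ) - 1/2) = (Real.sqrt D : ℂ) * (D:ℂ)^(k-1) := by
  have hD' : (0:ℝ) < D := by exact_mod_cast hD
  unfold Dpow
  have : ((D:ℝ) ^ ((k:ℝ) - 1/2)) = Real.sqrt D * (D:ℝ)^(k-1) := by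
    rw [Real.sqrt_eq_rpow, ← Real.rpow_natCast, ← Real.rpow_add hD']
    congr 1
    push_cast [Nat.cast_sub (show 1 ≤ k by omega)]
    ring
  rw [this]; push_cast; ring

lemma final_const (m : ℕ) (d Dc : ℂ) :
    (1 / (2 * (Real.pi : ℂ) * Complex.I))^(2*m+1) * ((d * ecoef m m) * ((-Dc)^m * (Nat.factorial m : ℂ)^2)) =
      -((Nat.factorial (2*m) : ℂ) / (4 * (Real.pi:ℂ))^(2*m+1)) * (d * Dc^m) := by
  have h1 : (Nat.choose (2*m) m : ℂ) * (Nat.factorial m : ℂ)^2 = (Nat.factorial (2*m) : ℂ) := by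
    have := Nat.choose_mul_factorial_mul_factorial (show m ≤ 2*m by omega)
    rw [show 2*m - m = m by omega] at this
    rw [← this]; push_cast; ring
  rw [← h1, ecoef]
  have hI : (1 / (2 * (Real.pi : ℂ) * Complex.I)) = (1/(2*(Real.pi:ℂ))) * (-Complex.I) := by
    have : (Real.pi:ℂ) ≠ 0 := by exact_mod_cast Real.pi_ne_zero
    field_simp
    simp
  have hI2 : (-Complex.I)^(2*m+1) = (-1)^m * (-Complex.I) := by
    rw [pow_succ, pow_mul]; simp
  have h4 : (4 * (Real.pi:ℂ))^(2*m+1) = (2*(Real.pi:ℂ))^(2*m+1) * (2 * 4^m) := by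
    rw [show 4 * (Real.pi:ℂ) = (2*(Real.pi:ℂ)) * 2 by ring, mul_pow, pow_succ (2:ℂ), pow_mul (2:ℂ)]
    norm_num
    ring
  have hm1 : ((-1:ℂ)^m) * (-1)^m = 1 := by rw [← mul_pow]; simp
  have hquarter : (-1/4:ℂ)^m = (-1)^m * (4^m)⁻¹ := by rw [div_pow]; rfl
  rw [hI, mul_pow, hI2, h4, hquarter, show (-Dc)^m = (-1)^m * Dc^m by rw [← mul_pow]; simp, one_div, inv_pow,
    div_eq_mul_inv (_ * _) (_ * (2 * 4^m)), mul_inv, mul_inv]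
  generalize (-1:ℂ)^m = s at *
  generalize ((2*(Real.pi:ℂ))^(2*m+1))⁻¹ = P
  linear_combination (P * ((4:ℂ)^m)⁻¹ * (Nat.choose (2*m) m : ℂ) * (Nat.factorial m : ℂ)^2 * d * Dc^m / 2) *
    (Complex.I^2 * s^2 * hm1 + Complex.I^2 * hm1 + Complex.I_sq)

theorem stmt5 (k : ℕ) (hk : 2 ≤ k) (D : ℤ) (hD : 0 < D)
    (hD4 : D % 4 = 0 ∨ D % 4 = 1) (hDsq : ¬∃ m : ℤ, m ^ 2 = D)
    (τ : ℂ) (hτ : 0 < τ.im) (hτE : ∀ q ∈ QD D, Qell q τ ≠ 0) :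
    xiOp k (F k D) τ = Dpow D (1 / 2 - (k : ℝ)) * fkD k D τ ∧
    (Dop^[2 * k - 1] (F k D)) τ =
      -((Nat.factorial (2 * k - 2) : ℂ) / (((4 * Real.pi) ^ (2 * k - 1) : ℝ) : ℂ)) *
        Dpow D (1 / 2 - (k : ℝ)) * fkD k D τ := by
  obtain ⟨r, hr, hr2, hsne⟩ := good_nhd hD hDsq hτ hτE
  obtain ⟨c0, hc0, hlow'⟩ := Qval_lower hD hτ
  have hD' : (0:ℝ) < D := by exact_mod_cast hD
  have hlow : ∀ q ∈ QD D, ∀ z ∈ ball τ r, c0 * (1 + |(q.2.1:ℝ)|) ≤ ‖Qval q z‖ :=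
    fun q hq z hz => hlow' q hq z (ball_subset_ball hr2 hz)
  have himz : ∀ z ∈ ball τ r, 0 < z.im ∧ z.im ≤ 2 * τ.im := by
    intro z hz
    have hzn : ‖z - τ‖ < τ.im/2 := by simpa [dist_eq_norm] using ball_subset_ball hr2 hz
    have h := (Complex.abs_im_le_norm (z - τ)).trans_lt hzn
    rw [Complex.sub_im, abs_lt] at h
    constructor <;> linarith
  have him : ∀ z ∈ ball τ r, 0 < z.im := fun z hz => (himz z hz).1
  have hτr : τ ∈ ball τ r := mem_ball_self hr
  obtain ⟨m, rfl⟩ : ∃ m, k = m + 1 := ⟨k-1, by omega⟩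
  set N := 2*m with hNdef
  set g : QD D → ℂ → ℂ := fun q z => (Qval (q : ℤ × ℤ × ℤ) z)⁻¹^(m+1) with hg
  set M : QD D → ℝ := fun q => c0⁻¹^(m+1) * (1 + |((q : ℤ × ℤ × ℤ).2.1 : ℝ)|)^(-(2:ℝ)) with hM
  have hMs : Summable M := (summable_b D hD hDsq).mul_left _
  have hgd : ∀ q, DifferentiableOn ℂ (g q) (ball τ r) := by
    intro q
    have hQd : Differentiable ℂ (Qval q) := fun z => (Qval_hasDerivAt _ z).differentiableAt
    exact (hQd.differentiableOn.inv (fun z hz => Qval_ne hD q.2 (him z hz))).pow (m+1)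
  have hgM : ∀ q, ∀ z ∈ ball τ r, ‖g q z‖ ≤ M q := by
    intro q z hz
    have h1 := hlow q q.2 z hz
    have hb : 0 < 1 + |((q : ℤ × ℤ × ℤ).2.1 : ℝ)| := by positivity
    have hb1 : 1 ≤ 1 + |((q : ℤ × ℤ × ℤ).2.1 : ℝ)| := by linarith [abs_nonneg ((q : ℤ × ℤ × ℤ).2.1 : ℝ)]
    simp only [hg, hM]
    rw [norm_pow, norm_inv]
    calc (‖Qval (q : ℤ × ℤ × ℤ) z‖⁻¹)^(m+1) ≤ ((c0 * (1 + |((q : ℤ × ℤ × ℤ).2.1 : ℝ)|))⁻¹)^(m+1) := by gcongr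
      _ = c0⁻¹^(m+1) * ((1 + |((q : ℤ × ℤ × ℤ).2.1 : ℝ)|)^(m+1))⁻¹ := by rw [mul_inv, mul_pow, inv_pow (1 + _)]
      _ ≤ _ := by
        rw [Real.rpow_neg hb.le, show (2:ℝ) = ((2:ℕ):ℝ) by norm_num, Real.rpow_natCast]
        gcongr
  set f0 : ℂ → ℂ := fun z => ∑' q, g q z with hf0
  have hf0d : DifferentiableOn ℂ f0 (ball τ r) :=
    Complex.differentiableOn_tsum_of_summable_norm hMs hgd isOpen_ball (fun q z hz => hgM q z hz)
  set c' : ℂ := Complex.I/2 * (Real.sqrt D : ℂ) * (D:ℂ)^m with hc'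
  set p : QD D → ℂ → ℂ := fun q z => Fsummand (m+1) D z q - c' * EN τ N (g q) z with hp
  have hpd : ∀ q, DifferentiableOn ℂ (p q) (ball τ r) := by
    intro q z hz
    obtain ⟨A, hA⟩ := Fs_hasW (m+1) hk hD q.2 (him z hz) (hsne q q.2 z hz)
    have h1 := hA.sub ((EN_hasW N (hgd q) z hz).const_mul c')
    have h2 := h1.congr_val rfl (show _ = (0:ℂ) by simp only [hg, hc', hNdef, Nat.add_sub_cancel]; ring)
    exact h2.toHol.differentiableAt.differentiableWithinAt
  obtain ⟨C, hC⟩ := EN_bound τ r N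
  have hpM : ∀ q, ∀ z ∈ ball τ r, ‖p q z‖ ≤ ((Real.sqrt D * (2*τ.im))^(2*(m+1)-1) + ‖c'‖ * C) * M q := by
    intro q z hz
    have h1 := Fs_bound (m+1) hk hD q.2 (him z hz) (hsne q q.2 z hz)
    have h2 := hC (g q) (M q) (hgM q) z hz
    have h3 := hgM q z hz
    simp only [hg, norm_pow] at h3
    have h4 : (Real.sqrt D * z.im)^(2*(m+1)-1) ≤ (Real.sqrt D * (2*τ.im))^(2*(m+1)-1) := by
      have := him z hz
      have := (himz z hz).2
      gcongr
    have h5 : ‖c' * EN τ N (g q) z‖ ≤ ‖c'‖ * (C * M q) := by rw [norm_mul]; gcongr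
    have h6 : (Real.sqrt D * z.im)^(2*(m+1)-1) * ‖(Qval q z)⁻¹‖^(m+1) ≤ (Real.sqrt D * (2*τ.im))^(2*(m+1)-1) * M q := by
      gcongr
    calc ‖p q z‖ ≤ _ := norm_sub_le _ _
      _ ≤ _ := by linarith
  have hMp : Summable (fun q => ((Real.sqrt D * (2*τ.im))^(2*(m+1)-1) + ‖c'‖ * C) * M q) := hMs.mul_left _
  set P : ℂ → ℂ := fun z => ∑' q, p q z with hP
  have hPd : DifferentiableOn ℂ P (ball τ r) :=
    Complex.differentiableOn_tsum_of_summable_norm hMp hpd isOpen_ball (fun q z hz => hpM q z hz)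
  set κ : ℂ := ((Real.sqrt D : ℂ) * ecoef m m) * ((-(D:ℂ))^m * (Nat.factorial m : ℂ)^2) with hκ
  have hpder : ∀ q, (deriv^[N+1] (p q)) τ = κ * g q τ := by
    intro q
    have h1 := Fs_WC2 (m+1) hk hD hDsq q.2 him (hsne q q.2)
    have h2 := h1.add _ ((EN_WC (hgd q) N).const_mul (-c'))
    have h3 := WC.hol isOpen_ball (N+1) (hpd q)
    have h4 := WC.unique isOpen_ball _ h3 (WC.congr_left isOpen_ball _ h2 (fun z _ => by simp only [hp]; ring)) τ hτr
    rw [h4, hκ]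
    simp only [hg, Nat.add_sub_cancel]
    ring
  have hPder : (deriv^[N+1] P) τ = κ * f0 τ := by
    have h1 := iter_deriv_hasSum (N+1) hr hMp hpM hpd
    simp only [hpder] at h1
    have h2 : HasSum (fun q => g q τ) (f0 τ) :=
      (Summable.of_norm_bounded hMs (fun q => hgM q τ hτr)).hasSum
    exact h1.unique (h2.mul_left κ)
  set K : ℂ := Dpow D (1 / 2 - ((m+1:ℕ) : ℝ)) / (((Nat.choose (2 * (m+1) - 2) ((m+1) - 1) : ℝ) * Real.pi : ℝ) : ℂ) with hK
  have hF : ∀ z ∈ ball τ r, F (m+1) D z = K * (P z + c' * EN τ N f0 z) := by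
    intro z hz
    unfold F
    rw [← hK]
    congr 1
    have h1 : HasSum (fun q => p q z) (P z) :=
      (Summable.of_norm_bounded hMp (fun q => hpM q z hz)).hasSum
    have h2 := (EN_hasSum N hMs hgM hgd z hz).mul_left c'
    have h3 := h1.add h2
    simp only [hp, sub_add_cancel] at h3
    exact h3.tsum_eq
  have hfk : Dpow D (1 / 2 - ((m+1:ℕ) : ℝ)) * fkD (m+1) D τ = K * ((Real.sqrt D : ℂ) * (D:ℂ)^m) * f0 τ := by
    unfold fkD
    rw [Dpow_eq (m+1) hk hD, hK, hf0]
    have : ∀ q : QD D, Qval (q : ℤ × ℤ × ℤ) τ ^ (-((m+1:ℕ) : ℤ)) = g q τ := by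
      intro q
      simp only [hg]
      rw [zpow_neg, zpow_natCast, inv_pow]
    simp only [this, Nat.add_sub_cancel]
    ring
  constructor
  · have h1 : HasW P (deriv P τ) 0 τ := HasW.hol (hPd.differentiableAt (isOpen_ball.mem_nhds hτr)).hasDerivAt
    have h2 := (h1.add ((EN_hasW N hf0d τ hτr).const_mul c')).const_mul K
    have h3 := (h2.congr_fun isOpen_ball hτr hF).wirDbar
    unfold xiOp
    rw [h3, hfk]
    have hKc : (starRingEnd ℂ) K = K := by
      rw [hK, Dpow, ← Complex.ofReal_div, Complex.conj_ofReal]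
    have hc'c : (starRingEnd ℂ) c' = -c' := by
      rw [hc']; simp only [map_mul, map_div₀, map_pow, Complex.conj_I, Complex.conj_ofReal, map_intCast, map_ofNat]; ring
    simp only [map_mul, zero_add, map_pow, Complex.conj_ofReal, Complex.conj_conj, hKc, hc'c]
    have hy : (τ.im : ℂ) ^ ((2 : ℤ) - 2 * ((m+1:ℕ) : ℤ)) * (τ.im:ℂ)^N = 1 := by
      have hy0 : (τ.im : ℂ) ≠ 0 := by exact_mod_cast hτ.ne'
      rw [← zpow_natCast, ← zpow_add₀ hy0, hNdef]
      convert zpow_zero _ using 2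
      push_cast; ring
    rw [hc']
    linear_combination (-2 * Complex.I * K * (Complex.I / 2 * (Real.sqrt D : ℂ) * (D:ℂ)^m) * f0 τ) * hy -
      K * (Real.sqrt D : ℂ) * (D:ℂ)^m * f0 τ * Complex.I_sq
  · have h1 := (((WC.hol isOpen_ball (N+1) hPd).add _ ((EN_WC hf0d N).const_mul c')).const_mul K)
    have h2 := WC.Dop isOpen_ball _ (WC.congr_left isOpen_ball _ h1 hF) τ hτr
    rw [show 2*(m+1)-1 = N+1 by omega, h2, hPder, mul_assoc _ (Dpow _ _), hfk]
    have h3 := final_const m (Real.sqrt D : ℂ) (D:ℂ)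
    rw [← hκ] at h3
    rw [show 2*(m+1)-2 = 2*m by omega]
    push_cast
    linear_combination (K * f0 τ) * h3
end

section
/- For every τ = x + iy ∈ ℍ with x ≠ 0, one has ξ_{2−2k}(φ̂)(τ) = τ^{−k}, i.e. 2i·y^{2−2k}·conj((∂φ̂/∂τ̄)(τ)) = τ^{−k}. -/
theorem phi_hasDerivAt (k : ℕ) (v : ℝ) :
    HasDerivAt (phi k) (Real.sin v ^ (2 * k - 2)) v := by
  have hc : Continuous fun u : ℝ => Real.sin u ^ (2 * k - 2) := by fun_prop
  exact intervalIntegral.integral_hasDerivAt_right (hc.intervalIntegrable _ _)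
    (hc.stronglyMeasurableAtFilter _ _) hc.continuousAt

theorem phi_neg (k : ℕ) (v : ℝ) : phi k (-v) = - phi k v := by
  have he : Even (2 * k - 2) := ⟨k - 1, by omega⟩
  have h := intervalIntegral.integral_comp_neg (a := 0) (b := v)
    (fun u : ℝ => Real.sin u ^ (2 * k - 2))
  simp only [Real.sin_neg, he.neg_pow, neg_zero] at h
  unfold phi
  rw [h, intervalIntegral.integral_symm]

theorem sign_phi (k : ℕ) (x y : ℝ) (hx : x ≠ 0) (hy : 0 < y) :
    Real.sign x * phi k (Real.arctan |y / x|) = phi k (Real.arctan (y / x)) := by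
  rcases lt_or_gt_of_ne hx with h | h
  · rw [Real.sign_of_neg h, abs_of_neg (div_neg_of_pos_of_neg hy h), Real.arctan_neg, phi_neg]
    ring
  · rw [Real.sign_of_pos h, abs_of_pos (div_pos hy h), one_mul]

theorem phiHat_eq (k : ℕ) (x y : ℝ) (hx : x ≠ 0) (hy : 0 < y) :
    phiHat k ((x : ℂ) + (y : ℂ) * Complex.I) =
      ((x : ℂ) + (y : ℂ) * Complex.I) ^ (k - 1) * ((phi k (Real.arctan (y / x)) : ℝ) : ℂ) := by
  rw [← sign_phi k x y hx hy]
  simp [phiHat, mul_assoc]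

theorem sin_pow (k : ℕ) (x y : ℝ) (hx : x ≠ 0) :
    Real.sin (Real.arctan (y / x)) ^ (2 * k - 2) = (y ^ 2 / (x ^ 2 + y ^ 2)) ^ (k - 1) := by
  have h0 : x ^ 2 + y ^ 2 ≠ 0 := by positivity
  rw [show 2 * k - 2 = 2 * (k - 1) by omega, pow_mul, Real.sin_sq_arctan]
  congr 1
  field_simp

theorem dxx_phiHat (k : ℕ) (x y : ℝ) (hx : x ≠ 0) (hy : 0 < y) :
    HasDerivAt (fun x : ℝ => phiHat k ((x : ℂ) + (y : ℂ) * Complex.I))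
      (((k - 1 : ℕ) : ℂ) * ((x : ℂ) + (y : ℂ) * Complex.I) ^ (k - 1 - 1)
          * ((phi k (Real.arctan (y / x)) : ℝ) : ℂ)
        + ((x : ℂ) + (y : ℂ) * Complex.I) ^ (k - 1) *
          (((y ^ 2 / (x ^ 2 + y ^ 2)) ^ (k - 1) * (-y / (x ^ 2 + y ^ 2)) : ℝ) : ℂ)) x := by
  have h0 : x ^ 2 + y ^ 2 ≠ 0 := by positivity
  have h1 : HasDerivAt (fun x : ℝ => ((x : ℂ) + (y : ℂ) * Complex.I)) 1 x :=
    (Complex.ofRealCLM.hasDerivAt (x := x)).add_const _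
  have h2 : HasDerivAt (fun x : ℝ => phi k (Real.arctan (y / x)))
      ((y ^ 2 / (x ^ 2 + y ^ 2)) ^ (k - 1) * (-y / (x ^ 2 + y ^ 2))) x := by
    have h3 : HasDerivAt (fun x : ℝ => y / x) (y * -(x ^ 2)⁻¹) x := by
      simpa [div_eq_mul_inv] using (hasDerivAt_inv hx).const_mul y
    have h4 := (phi_hasDerivAt k _).comp x h3.arctan
    rw [sin_pow k x y hx] at h4
    refine h4.congr_deriv ?_
    congr 1
    field_simp
  have h5 := (h1.pow (k - 1)).mul h2.ofReal_comp
  refine (h5.congr_deriv (by simp)).congr_of_eventuallyEq ?_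
  filter_upwards [isOpen_ne.mem_nhds hx] with t ht
  simpa using phiHat_eq k t y ht hy

theorem dyy_phiHat (k : ℕ) (x y : ℝ) (hx : x ≠ 0) (hy : 0 < y) :
    HasDerivAt (fun y : ℝ => phiHat k ((x : ℂ) + (y : ℂ) * Complex.I))
      (((k - 1 : ℕ) : ℂ) * ((x : ℂ) + (y : ℂ) * Complex.I) ^ (k - 1 - 1) * Complex.I
          * ((phi k (Real.arctan (y / x)) : ℝ) : ℂ)
        + ((x : ℂ) + (y : ℂ) * Complex.I) ^ (k - 1) *
          (((y ^ 2 / (x ^ 2 + y ^ 2)) ^ (k - 1) * (x / (x ^ 2 + y ^ 2)) : ℝ) : ℂ)) y := by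
  have h0 : x ^ 2 + y ^ 2 ≠ 0 := by positivity
  have h1 : HasDerivAt (fun y : ℝ => ((x : ℂ) + (y : ℂ) * Complex.I)) Complex.I y := by
    simpa using ((Complex.ofRealCLM.hasDerivAt (x := y)).mul_const Complex.I).const_add (x : ℂ)
  have h2 : HasDerivAt (fun y : ℝ => phi k (Real.arctan (y / x)))
      ((y ^ 2 / (x ^ 2 + y ^ 2)) ^ (k - 1) * (x / (x ^ 2 + y ^ 2))) y := by
    have h3 : HasDerivAt (fun y : ℝ => y / x) (1 / x) y := (hasDerivAt_id y).div_const x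
    have h4 := (phi_hasDerivAt k _).comp y h3.arctan
    rw [sin_pow k x y hx] at h4
    refine h4.congr_deriv ?_
    congr 1
    field_simp
  have h5 := (h1.pow (k - 1)).mul h2.ofReal_comp
  refine (h5.congr_deriv (by simp)).congr_of_eventuallyEq ?_
  filter_upwards [lt_mem_nhds hy] with t ht
  simpa using phiHat_eq k x t hx ht

theorem stmt6 (k : ℕ) (hk : 2 ≤ k) (τ : ℂ) (hτ : 0 < τ.im) (hx : τ.re ≠ 0) :
    xiOp k (phiHat k) τ = τ ^ (-(k : ℤ)) := by
  obtain ⟨x, y⟩ := τ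
  simp only at hτ hx
  have hz : (⟨x, y⟩ : ℂ) = (x : ℂ) + (y : ℂ) * Complex.I := by
    apply Complex.ext <;> simp
  unfold xiOp wirDbar dxx dyy
  simp only
  rw [(dxx_phiHat k x y hx hτ).deriv, (dyy_phiHat k x y hx hτ).deriv, hz]
  obtain ⟨m, rfl⟩ : ∃ m, k = m + 1 := ⟨k - 1, by omega⟩
  simp only [Nat.add_sub_cancel]
  set P : ℂ := ((phi (m + 1) (Real.arctan (y / x)) : ℝ) : ℂ)
  have hy0 : (y : ℂ) ≠ 0 := by exact_mod_cast hτ.ne'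
  have hI : Complex.I ^ 2 = -1 := Complex.I_sq
  have hre : (x : ℂ) ^ 2 + (y : ℂ) ^ 2 =
      ((x : ℂ) + (y : ℂ) * Complex.I) * ((x : ℂ) - (y : ℂ) * Complex.I) := by
    linear_combination (y : ℂ) ^ 2 * hI
  have hn : (x : ℂ) ^ 2 + (y : ℂ) ^ 2 ≠ 0 := by
    have : x ^ 2 + y ^ 2 ≠ 0 := by positivity
    exact_mod_cast this
  have hzn : (x : ℂ) + (y : ℂ) * Complex.I ≠ 0 := fun h => hn (by rw [hre, h, zero_mul])
  have hwn : (x : ℂ) - (y : ℂ) * Complex.I ≠ 0 := fun h => hn (by rw [hre, h, mul_zero])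
  have e : ((m : ℂ) * ((x : ℂ) + (y : ℂ) * Complex.I) ^ (m - 1) * P
        + ((x : ℂ) + (y : ℂ) * Complex.I) ^ m *
          (((y ^ 2 / (x ^ 2 + y ^ 2)) ^ m * (-y / (x ^ 2 + y ^ 2)) : ℝ) : ℂ)
      + Complex.I * ((m : ℂ) * ((x : ℂ) + (y : ℂ) * Complex.I) ^ (m - 1) * Complex.I * P
        + ((x : ℂ) + (y : ℂ) * Complex.I) ^ m *
          (((y ^ 2 / (x ^ 2 + y ^ 2)) ^ m * (x / (x ^ 2 + y ^ 2)) : ℝ) : ℂ))) / 2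
      = Complex.I / 2 * ((y : ℂ) ^ 2) ^ m / ((x : ℂ) - (y : ℂ) * Complex.I) ^ (m + 1) := by
    push_cast
    rw [hre]
    set z := (x : ℂ) + (y : ℂ) * Complex.I with hzdef
    set w := (x : ℂ) - (y : ℂ) * Complex.I
    have h1 : z ^ m * (((y : ℂ) ^ 2 / (z * w)) ^ m) = ((y : ℂ) ^ 2) ^ m / w ^ m := by
      rw [← mul_pow, ← div_pow]
      congr 1
      field_simp
    have h2 : -(y : ℂ) / (z * w) + Complex.I * ((x : ℂ) / (z * w)) = Complex.I / w := by
      have : -(y : ℂ) + Complex.I * x = Complex.I * z := by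
        rw [hzdef]; linear_combination (-(y : ℂ)) * hI
      field_simp
      linear_combination this
    have h3 : ((y : ℂ) ^ 2) ^ m / w ^ m * (Complex.I / w) / 2 =
        Complex.I / 2 * ((y : ℂ) ^ 2) ^ m / w ^ (m + 1) := by
      field_simp
      ring
    rw [← h3, ← h1, ← h2]
    linear_combination ((m : ℂ) * z ^ (m - 1) * P / 2) * hI
  rw [e]
  have hexp : (2 : ℤ) - 2 * ((m + 1 : ℕ) : ℤ) = -((2 * m : ℕ) : ℤ) := by push_cast; ring
  rw [hexp, zpow_neg, zpow_neg, zpow_natCast, zpow_natCast]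
  simp only [map_mul, map_div₀, map_pow, map_sub, Complex.conj_I, Complex.conj_ofReal, map_ofNat]
  rw [show (x : ℂ) - y * -Complex.I = x + y * Complex.I by ring, ← pow_mul]
  field_simp
  linear_combination (-(((x : ℂ) + y * Complex.I) ^ (m + 1))⁻¹) * hI
end
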